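/- Let F_2/F_1 be a finite Galois extension of fields with Galois group G, let j: F_1 ↪ F_2 be the inclusion, and let n ≥ 1. Then the induced map j_*: K_n^M(F_1)_ℚ → K_n^M(F_2)_ℚ is injective and its image equals the subspace (K_n^M(F_2)_ℚ)^G of G-invariants (where G acts on K_n^M(F_2)_ℚ by functoriality); i.e., j_* induces an isomorphism K_n^M(F_1)_ℚ ≅ (K_n^M(F_2)_ℚ)^G. -/

import Mathlib

open scoped TensorProduct
open ExteriorAlgebra

noncomputable section ChowPrelim

universe u

/-- The ℚ-vector space `F^× ⊗ ℚ` attached to a field `F`. -/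
abbrev UnitsQ (F : Type u) [Field F] : Type u := ℚ ⊗[ℤ] (Additive Fˣ)

/-- The canonical map `F → F^× ⊗ ℚ`, sending a nonzero `x` to `x ⊗ 1` and `0` to `0`. -/
noncomputable def mkQ {F : Type u} [Field F] (x : F) : UnitsQ F :=
  letI := Classical.dec (x = 0)
  if h : x = 0 then 0 else (1 : ℚ) ⊗ₜ[ℤ] (Additive.ofMul (Units.mk0 x h))

/-- The wedge `x₁ ∧ ⋯ ∧ xₙ ∈ Λ^n (F^× ⊗ ℚ)` of a family of elements of `F`. -/
noncomputable def wedgeF {F : Type u} [Field F] (n : ℕ) (x : Fin n → F) :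
    ⋀[ℚ]^n (UnitsQ F) :=
  ⟨ExteriorAlgebra.ιMulti ℚ n (fun i => mkQ (x i)),
    ExteriorAlgebra.ιMulti_range ℚ n ⟨_, rfl⟩⟩

/-- Wedge of an abstract family of vectors. -/
noncomputable def wedgeV {M : Type u} [AddCommGroup M] [Module ℚ M] (n : ℕ) (v : Fin n → M) :
    ⋀[ℚ]^n M :=
  ⟨ExteriorAlgebra.ιMulti ℚ n v, ExteriorAlgebra.ιMulti_range ℚ n ⟨_, rfl⟩⟩

/-- The product `a ∧ v₁ ∧ ⋯ ∧ v_q : Λ^r M` of an element `a ∈ Λ^p M` with `q` further vectors,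
where `p + q = r`. -/
noncomputable def wedgeMulC {M : Type u} [AddCommGroup M] [Module ℚ M] (p q r : ℕ)
    (h : p + q = r) (a : ⋀[ℚ]^p M) (v : Fin q → M) : ⋀[ℚ]^r M :=
  ⟨a.1 * (ExteriorAlgebra.ιMulti ℚ q v : ExteriorAlgebra ℚ M), by
    subst h
    have hmem : (ExteriorAlgebra.ιMulti ℚ q v : ExteriorAlgebra ℚ M) ∈
        (LinearMap.range (ι ℚ : M →ₗ[ℚ] ExteriorAlgebra ℚ M)) ^ q :=
      ExteriorAlgebra.ιMulti_range ℚ q ⟨_, rfl⟩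
    have h2 := Submodule.mul_mem_mul a.2 hmem
    rw [← pow_add] at h2
    exact h2⟩

/-- The functorial map `Λ^n M → Λ^n N` induced by a linear map. -/
noncomputable def powMap {M N : Type u} [AddCommGroup M] [Module ℚ M]
    [AddCommGroup N] [Module ℚ N] (n : ℕ) (f : M →ₗ[ℚ] N) :
    ⋀[ℚ]^n M →ₗ[ℚ] ⋀[ℚ]^n N :=
  (ExteriorAlgebra.map f).toLinearMap.restrict (p := ⋀[ℚ]^n M) (q := ⋀[ℚ]^n N)
    (by
      intro x hx
      have h : Submodule.map (ExteriorAlgebra.map f).toLinearMap (⋀[ℚ]^n M) ≤ ⋀[ℚ]^n N := by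
        rw [← ExteriorAlgebra.ιMulti_span_fixedDegree, ← ExteriorAlgebra.ιMulti_span_fixedDegree,
          Submodule.map_span]
        refine Submodule.span_le.2 ?_
        rintro _ ⟨_, ⟨v, rfl⟩, rfl⟩
        exact Submodule.subset_span ⟨f ∘ v, (ExteriorAlgebra.map_apply_ιMulti f v).symm⟩
      exact h ⟨x, hx, rfl⟩)

/-- The linear map `F^× ⊗ ℚ → K^× ⊗ ℚ` induced by a field embedding. -/
noncomputable def unitsQMap {F K : Type u} [Field F] [Field K] (j : F →+* K) :
    UnitsQ F →ₗ[ℚ] UnitsQ K :=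
  LinearMap.baseChange ℚ
    ((MonoidHom.toAdditive (Units.map (j : F →* K))).toIntLinearMap)

section PreBloch

variable (F : Type u) [Field F]

/-- Auxiliary "difference" of two points of `P^1(F) = Option F` (`none` is `∞`),
used to define the cross-ratio. -/
def pdiff : Option F → Option F → F
  | some a, some b => a - b
  | _, _ => 1

/-- The cross-ratio of four points of `P^1(F)`, as an element of `F`
(it lies in `F ∖ {0,1}` when the four points are distinct). -/
def crossRatio (x1 x2 x3 x4 : Option F) : F :=
  (pdiff F x1 x3 * pdiff F x2 x4) / (pdiff F x1 x4 * pdiff F x2 x3)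

/-- The subspace of relations defining the pre-Bloch group: `{0}₂, {1}₂, {∞}₂` and the
five-term cross-ratio relations for five distinct points of `P^1(F)`. -/
def B2Rel : Submodule ℚ (Option F →₀ ℚ) :=
  Submodule.span ℚ
    ({Finsupp.single (some 0) 1, Finsupp.single (some 1) 1, Finsupp.single none 1} ∪
      {r | ∃ x : Fin 5 → Option F, Function.Injective x ∧
        r = ∑ i : Fin 5, ((-1 : ℚ) ^ (i : ℕ)) •
          Finsupp.single (some (crossRatio F (x (i.succAbove 0)) (x (i.succAbove 1))
            (x (i.succAbove 2)) (x (i.succAbove 3)))) (1 : ℚ)})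

/-- The pre-Bloch group `B₂(F)` (with ℚ-coefficients). -/
abbrev B2 : Type u := (Option F →₀ ℚ) ⧸ B2Rel F

/-- The generator `{x}₂` of the pre-Bloch group. -/
def B2.gen {F : Type u} [Field F] (x : F) : B2 F :=
  Submodule.Quotient.mk (Finsupp.single (some x) 1)

end PreBloch

section Deltas

variable (F : Type u) [Field F]

/-- `d` is the differential `δ₂ : B₂(F) → Λ² F^×`, `{x}₂ ↦ x ∧ (1-x)`. -/
def IsDelta2 (d : B2 F →ₗ[ℚ] ⋀[ℚ]^2 (UnitsQ F)) : Prop :=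
  ∀ x : F, x ≠ 0 → x ≠ 1 → d (B2.gen x) = wedgeF 2 ![x, 1 - x]

/-- `d` is the differential `δ₃ : B₂(F) ⊗ F^× → Λ³ F^×`, `{x}₂ ⊗ y ↦ x ∧ (1-x) ∧ y`. -/
def IsDelta3 (d : B2 F ⊗[ℚ] UnitsQ F →ₗ[ℚ] ⋀[ℚ]^3 (UnitsQ F)) : Prop :=
  ∀ x y : F, x ≠ 0 → x ≠ 1 → y ≠ 0 →
    d (B2.gen x ⊗ₜ mkQ y) = wedgeF 3 ![x, 1 - x, y]

/-- `d` is the differential `δ₄ : B₂(F) ⊗ Λ² F^× → Λ⁴ F^×`,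
`{x}₂ ⊗ (y ∧ z) ↦ x ∧ (1-x) ∧ y ∧ z`. -/
def IsDelta4 (d : B2 F ⊗[ℚ] (⋀[ℚ]^2 (UnitsQ F)) →ₗ[ℚ] ⋀[ℚ]^4 (UnitsQ F)) : Prop :=
  ∀ x y z : F, x ≠ 0 → x ≠ 1 → y ≠ 0 → z ≠ 0 →
    d (B2.gen x ⊗ₜ wedgeF 2 ![y, z]) = wedgeF 4 ![x, 1 - x, y, z]

end Deltas

section Valuations

variable {F K : Type u} [Field F] [Field K]

/-- `ν` is (the additive form of) a discrete valuation on `F`: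
a surjection onto `ℤ` defined on `F ∖ {0}`, multiplicative, and
satisfying the ultrametric inequality. -/
structure IsDVal (ν : F → ℤ) : Prop where
  map_mul : ∀ x y : F, x ≠ 0 → y ≠ 0 → ν (x * y) = ν x + ν y
  map_add : ∀ x y : F, x ≠ 0 → y ≠ 0 → x + y ≠ 0 → min (ν x) (ν y) ≤ ν (x + y)
  surj : ∀ n : ℤ, ∃ x : F, x ≠ 0 ∧ ν x = n

/-- `res : F → K` realizes `K` as the residue field of the discrete valuation `ν`:
it is a surjective ring homomorphism on the valuation ring `O_ν` with kernel the
maximal ideal `m_ν` (and arbitrary elsewhere). -/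
structure IsResidue (ν : F → ℤ) (res : F → K) : Prop where
  map_one : res 1 = 1
  map_add : ∀ x y : F, (x = 0 ∨ 0 ≤ ν x) → (y = 0 ∨ 0 ≤ ν y) →
    res (x + y) = res x + res y
  map_mul : ∀ x y : F, (x = 0 ∨ 0 ≤ ν x) → (y = 0 ∨ 0 ≤ ν y) →
    res (x * y) = res x * res y
  zero_iff : ∀ x : F, (x = 0 ∨ 0 ≤ ν x) → (res x = 0 ↔ (x = 0 ∨ 0 < ν x))
  surj : ∀ z : K, ∃ x : F, (x = 0 ∨ 0 ≤ ν x) ∧ res x = z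

/-- `D` is the tame symbol `∂_ν^{(n+1)} : Λ^{n+1} F^× → Λ^n K^×` attached to the discrete
valuation `ν` with residue field `K` (via `res`): it is characterized by
`∂(π ∧ u₂ ∧ ⋯ ∧ u_{n+1}) = ū₂ ∧ ⋯ ∧ ū_{n+1}` for a uniformizer `π` and units `uᵢ`. -/
def IsTame (ν : F → ℤ) (res : F → K) (n : ℕ)
    (D : ⋀[ℚ]^(n + 1) (UnitsQ F) →ₗ[ℚ] ⋀[ℚ]^n (UnitsQ K)) : Prop :=
  ∀ (π : F) (u : Fin n → F), π ≠ 0 → ν π = 1 → (∀ i, u i ≠ 0 ∧ ν (u i) = 0) →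
    D (wedgeF (n + 1) (Fin.cons π u)) = wedgeF n (fun i => res (u i))

/-- `D` is the tame symbol `∂_ν^{(2)} : Λ² F^× → K^×`, with target the residue field itself. -/
def IsTame2U (ν : F → ℤ) (res : F → K) (D : ⋀[ℚ]^2 (UnitsQ F) →ₗ[ℚ] UnitsQ K) : Prop :=
  ∀ π u : F, π ≠ 0 → ν π = 1 → u ≠ 0 → ν u = 0 → D (wedgeF 2 ![π, u]) = mkQ (res u)

/-- `D` is the tame symbol `∂_ν : B₂(F) ⊗ F^× → B₂(K)`. -/
def IsTameB1 (ν : F → ℤ) (res : F → K)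
    (D : B2 F ⊗[ℚ] UnitsQ F →ₗ[ℚ] B2 K) : Prop :=
  (∀ a b : F, a ≠ 0 → a ≠ 1 → ν a ≠ 0 → b ≠ 0 → D (B2.gen a ⊗ₜ mkQ b) = 0) ∧
  (∀ u b : F, u ≠ 0 → ν u = 0 → b ≠ 0 →
    D (B2.gen u ⊗ₜ mkQ b) = -((ν b : ℚ) • B2.gen (res u)))

/-- `D` is the tame symbol `∂_ν : B₂(F) ⊗ Λ² F^× → B₂(K) ⊗ K^×`, where `D2` is the tame
symbol `∂_ν^{(2)}`. -/
def IsTameB2 (ν : F → ℤ) (res : F → K) (D2 : ⋀[ℚ]^2 (UnitsQ F) →ₗ[ℚ] UnitsQ K)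
    (D : B2 F ⊗[ℚ] (⋀[ℚ]^2 (UnitsQ F)) →ₗ[ℚ] B2 K ⊗[ℚ] UnitsQ K) : Prop :=
  (∀ (a : F) (b : ⋀[ℚ]^2 (UnitsQ F)), a ≠ 0 → a ≠ 1 → ν a ≠ 0 → D (B2.gen a ⊗ₜ b) = 0) ∧
  (∀ (u : F) (b : ⋀[ℚ]^2 (UnitsQ F)), u ≠ 0 → ν u = 0 →
    D (B2.gen u ⊗ₜ b) = -(B2.gen (res u) ⊗ₜ D2 b))

/-- `D` is the tame symbol `∂_ν : B₂(F) ⊗ Λ^{n+1} F^× → B₂(K) ⊗ Λ^n K^×`, where `Dn` is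
the tame symbol `∂_ν^{(n+1)}`. -/
def IsTameBGen (ν : F → ℤ) (res : F → K) (n : ℕ)
    (Dn : ⋀[ℚ]^(n + 1) (UnitsQ F) →ₗ[ℚ] ⋀[ℚ]^n (UnitsQ K))
    (D : B2 F ⊗[ℚ] (⋀[ℚ]^(n + 1) (UnitsQ F)) →ₗ[ℚ] B2 K ⊗[ℚ] (⋀[ℚ]^n (UnitsQ K))) : Prop :=
  (∀ (a : F) (b : ⋀[ℚ]^(n + 1) (UnitsQ F)), a ≠ 0 → a ≠ 1 → ν a ≠ 0 →
    D (B2.gen a ⊗ₜ b) = 0) ∧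
  (∀ (u : F) (b : ⋀[ℚ]^(n + 1) (UnitsQ F)), u ≠ 0 → ν u = 0 →
    D (B2.gen u ⊗ₜ b) = -(B2.gen (res u) ⊗ₜ Dn b))

end Valuations

section Fields

variable (k F : Type u) [Field k] [Field F] [Algebra k F]

/-- `F` is a finitely generated extension of `k` of transcendence degree `1`. -/
def IsFields1 : Prop :=
  (∃ s : Finset F, IntermediateField.adjoin k (s : Set F) = ⊤) ∧
  ∃ x : F, Transcendental k x ∧
    Algebra.IsAlgebraic (IntermediateField.adjoin k {x}) F

/-- `F` is a finitely generated extension of `k` of transcendence degree `2`. -/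
def IsFields2 : Prop :=
  (∃ s : Finset F, IntermediateField.adjoin k (s : Set F) = ⊤) ∧
  ∃ x y : F, AlgebraicIndependent k ![x, y] ∧
    Algebra.IsAlgebraic (IntermediateField.adjoin k {x, y}) F

/-- `res : F → k` is the canonical residue map of `ν` onto `k`
(restricting to the identity on `k`). -/
def GoodResK (ν : F → ℤ) (res : F → k) : Prop :=
  IsResidue ν res ∧ ∀ c : k, res (algebraMap k F c) = c

/-- The set `val(F)` of discrete valuations of `F` trivial on `k` with residue field `k`. -/
def ValInd : Type u :=
  {ν : F → ℤ // IsDVal ν ∧ (∀ c : k, c ≠ 0 → ν (algebraMap k F c) = 0) ∧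
    ∃ res : F → k, GoodResK k F ν res}

/-- `h : Λ³ F^× → B₂(k)` is a lifted reciprocity map on `F ∈ Fields₁`:
(1) `-δ₂(h a) = Σ_{ν ∈ val(F)} ∂_ν^{(3)} a`;
(2) `h (δ₃ c) = Σ_{ν ∈ val(F)} ∂_ν c`;
(3) `h` vanishes on the image of `Λ² F^× ⊗ k^× → Λ³ F^×`. -/
def IsLiftedRec (h : ⋀[ℚ]^3 (UnitsQ F) →ₗ[ℚ] B2 k) : Prop :=
  (∀ d2 : B2 k →ₗ[ℚ] ⋀[ℚ]^2 (UnitsQ k), IsDelta2 k d2 →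
    ∀ res : ∀ _ : ValInd k F, F → k, (∀ v : ValInd k F, GoodResK k F v.1 (res v)) →
    ∀ D : ∀ _ : ValInd k F, ⋀[ℚ]^3 (UnitsQ F) →ₗ[ℚ] ⋀[ℚ]^2 (UnitsQ k),
      (∀ v : ValInd k F, IsTame v.1 (res v) 2 (D v)) →
    ∀ a : ⋀[ℚ]^3 (UnitsQ F), -(d2 (h a)) = ∑ᶠ v : ValInd k F, D v a) ∧
  (∀ d3 : B2 F ⊗[ℚ] UnitsQ F →ₗ[ℚ] ⋀[ℚ]^3 (UnitsQ F), IsDelta3 F d3 →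
    ∀ res : ∀ _ : ValInd k F, F → k, (∀ v : ValInd k F, GoodResK k F v.1 (res v)) →
    ∀ DB : ∀ _ : ValInd k F, B2 F ⊗[ℚ] UnitsQ F →ₗ[ℚ] B2 k,
      (∀ v : ValInd k F, IsTameB1 v.1 (res v) (DB v)) →
    ∀ c : B2 F ⊗[ℚ] UnitsQ F, h (d3 c) = ∑ᶠ v : ValInd k F, DB v c) ∧
  (∀ (y z : F) (c : k), y ≠ 0 → z ≠ 0 → c ≠ 0 →
    h (wedgeF 3 ![y, z, algebraMap k F c]) = 0)

end Fields

/-- The degree `[K : j(F)]` of a field embedding. -/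
noncomputable def fieldDeg {F K : Type u} [Field F] [Field K] (j : F →+* K) : ℕ :=
  letI : Algebra F K := j.toAlgebra
  Module.finrank F K

/-- The pullback `j^* h = (1/[F₂ : j(F₁)]) · h ∘ j_*` of a lifted reciprocity map. -/
noncomputable def pullRec (k F₁ F₂ : Type u) [Field k] [Field F₁] [Field F₂]
    (j : F₁ →+* F₂) (h : ⋀[ℚ]^3 (UnitsQ F₂) →ₗ[ℚ] B2 k) :
    ⋀[ℚ]^3 (UnitsQ F₁) →ₗ[ℚ] B2 k :=
  ((fieldDeg j : ℚ))⁻¹ • (h ∘ₗ powMap 3 (unitsQMap j))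

end ChowPrelim

noncomputable section ChowPrelim2

universe u

open scoped TensorProduct

/-- The monic irreducible polynomials over `F`, indexing the closed points of `𝔸¹_F`,
i.e. the general discrete valuations of `F(t)`. -/
def MonicIrr (F : Type u) [Field F] : Type u :=
  {p : Polynomial F // p.Monic ∧ Irreducible p}

/-- The residue field `F(p) = F[t]/(p)` of the valuation attached to a monic irreducible
polynomial `p`. -/
def ResField {F : Type u} [Field F] (p : MonicIrr F) : Type u := AdjoinRoot p.1

noncomputable instance ResField.instField {F : Type u} [Field F] (p : MonicIrr F) :
    Field (ResField p) :=
  letI : Fact (Irreducible p.1) := ⟨p.2.2⟩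
  inferInstanceAs (Field (AdjoinRoot p.1))

/-- `ν` is the discrete valuation of `F(t)` attached to the monic irreducible polynomial `p`. -/
def IsNuP {F : Type u} [Field F] (p : MonicIrr F) (ν : RatFunc F → ℤ) : Prop :=
  IsDVal ν ∧ ν (algebraMap (Polynomial F) (RatFunc F) p.1) = 1 ∧
    ∀ g : Polynomial F, g ≠ 0 → ¬(p.1 ∣ g) →
      ν (algebraMap (Polynomial F) (RatFunc F) g) = 0

/-- `res` is the canonical residue map `F(t) → F(p)` of the valuation attached to `p`. -/
def IsResP {F : Type u} [Field F] (p : MonicIrr F) (ν : RatFunc F → ℤ)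
    (res : RatFunc F → ResField p) : Prop :=
  IsResidue ν res ∧ ∀ g : Polynomial F,
    res (algebraMap (Polynomial F) (RatFunc F) g) =
      (AdjoinRoot.mk p.1 g : AdjoinRoot p.1)

/-- Bundled realization of the residue field of a discrete valuation `ν` on `L`
(trivial on `k`): a field `R` with a `k`-algebra structure together with the residue map. -/
structure ResData (k L : Type u) [Field k] [Field L] [Algebra k L] (ν : L → ℤ) :
    Type (u + 1) where
  R : Type u
  [fieldR : Field R]
  [algR : Algebra k R]
  res : L → R
  isRes : IsResidue ν res
  compat : ∀ c : k, res (algebraMap k L c) = algebraMap k R c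

attribute [instance] ResData.fieldR ResData.algR

/-- The set `dval(L)` of divisorial valuations of `L ∈ Fields₂`: discrete valuations trivial
on `k` whose residue field is a finitely generated extension of `k` of transcendence
degree `1`. -/
def DValInd (k L : Type u) [Field k] [Field L] [Algebra k L] : Type u :=
  {ν : L → ℤ // IsDVal ν ∧ (∀ c : k, c ≠ 0 → ν (algebraMap k L c) = 0) ∧
    ∃ rd : ResData k L ν, IsFields1 k rd.R}

/-- A height-one prime ideal (in a domain). -/
def IsHeightOne {R : Type u} [CommRing R] (p : Ideal R) : Prop :=
  p.IsPrime ∧ p ≠ ⊥ ∧ ∀ q : Ideal R, q.IsPrime → q < p → q = ⊥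

/-- `R/p` is regular, i.e. (for a one-dimensional local ring) the maximal ideal of `R/p`
is principal. -/
def QuotRegular {R : Type u} [CommRing R] [IsLocalRing R] (p : Ideal R) : Prop :=
  ∃ t : R, Ideal.map (Ideal.Quotient.mk p) (IsLocalRing.maximalIdeal R) =
    Ideal.span {Ideal.Quotient.mk p t}

/-- The height-one primes `p` of `R` with `R/p` regular. -/
def RegPrimes (R : Type u) [CommRing R] [IsLocalRing R] : Type u :=
  {p : Ideal R // IsHeightOne p ∧ QuotRegular p}

instance RegPrimes.isPrime {R : Type u} [CommRing R] [IsLocalRing R] (p : RegPrimes R) :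
    p.1.IsPrime := p.2.1.1

/-- The residue field `κ(p) = Frac(R/p)` of a prime `p`. -/
def ResFieldP {R : Type u} [CommRing R] [IsLocalRing R] [IsDomain R] (p : RegPrimes R) :
    Type u := FractionRing (R ⧸ p.1)

noncomputable instance ResFieldP.instField {R : Type u} [CommRing R] [IsLocalRing R]
    [IsDomain R] (p : RegPrimes R) : Field (ResFieldP p) :=
  inferInstanceAs (Field (FractionRing (R ⧸ p.1)))

/-- `ν` is the discrete valuation `ν_p` of `L = Frac R` attached to a height-one prime `p`:
it is nonnegative on `R` and positive exactly on `p`. -/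
def IsNuPrime {R L : Type u} [CommRing R] [Field L] [Algebra R L] (p : Ideal R)
    (ν : L → ℤ) : Prop :=
  IsDVal ν ∧ (∀ x : R, x ≠ 0 → 0 ≤ ν (algebraMap R L x)) ∧
    ∀ x : R, x ≠ 0 → (x ∈ p ↔ 0 < ν (algebraMap R L x))

/-- `res` is the canonical residue map `L → κ(p)` of the valuation `ν_p`. -/
def IsResPrime {R L : Type u} [CommRing R] [IsLocalRing R] [IsDomain R] [Field L]
    [Algebra R L] (p : RegPrimes R) (ν : L → ℤ) (res : L → ResFieldP p) : Prop :=
  IsResidue ν res ∧ ∀ x : R,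
    res (algebraMap R L x) =
      algebraMap (R ⧸ p.1) (FractionRing (R ⧸ p.1)) (Ideal.Quotient.mk p.1 x)

/-- `ν̄` is the discrete valuation of `κ(p)` attached to the discrete valuation ring `R/p`:
nonnegative on `R/p` and positive exactly on the image of the maximal ideal of `R`. -/
def IsNuBar {R : Type u} [CommRing R] [IsLocalRing R] [IsDomain R] (p : RegPrimes R)
    (ν : ResFieldP p → ℤ) : Prop :=
  IsDVal ν ∧
  (∀ x : R ⧸ p.1, x ≠ 0 →
    0 ≤ ν (algebraMap (R ⧸ p.1) (FractionRing (R ⧸ p.1)) x)) ∧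
  ∀ x : R, Ideal.Quotient.mk p.1 x ≠ 0 →
    (x ∈ IsLocalRing.maximalIdeal R ↔
      0 < ν (algebraMap (R ⧸ p.1) (FractionRing (R ⧸ p.1)) (Ideal.Quotient.mk p.1 x)))

/-- `res` is the canonical residue map `κ(p) → k` of the valuation `ν̄_p`
(restricting to the identity on `k`). -/
def IsResBar {k R : Type u} [Field k] [CommRing R] [IsLocalRing R] [IsDomain R]
    [Algebra k R] (p : RegPrimes R) (ν : ResFieldP p → ℤ) (res : ResFieldP p → k) : Prop :=
  IsResidue ν res ∧ ∀ c : k,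
    res (algebraMap (R ⧸ p.1) (FractionRing (R ⧸ p.1))
      (Ideal.Quotient.mk p.1 (algebraMap k R c))) = c

/-- The Steinberg relations subspace of `Λ^n F^×` (with ℚ-coefficients). -/
def MilnorRel (F : Type u) [Field F] : (n : ℕ) → Submodule ℚ (⋀[ℚ]^n (UnitsQ F))
  | 0 => ⊥
  | 1 => ⊥
  | (m + 2) => Submodule.span ℚ
      {x | ∃ (a : F) (v : Fin m → F), a ≠ 0 ∧ a ≠ 1 ∧ (∀ i, v i ≠ 0) ∧
        x = wedgeF (m + 2) (Fin.cons a (Fin.cons (1 - a) v))}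

/-- The rational Milnor K-group `K_n^M(F) ⊗ ℚ`: the quotient of `Λ^n F^×` by the
Steinberg relations. -/
def MilnorQ (F : Type u) [Field F] (n : ℕ) : Type u :=
  (⋀[ℚ]^n (UnitsQ F)) ⧸ MilnorRel F n

noncomputable instance MilnorQ.instAddCommGroup (F : Type u) [Field F] (n : ℕ) :
    AddCommGroup (MilnorQ F n) :=
  inferInstanceAs (AddCommGroup ((⋀[ℚ]^n (UnitsQ F)) ⧸ MilnorRel F n))

noncomputable instance MilnorQ.instModule (F : Type u) [Field F] (n : ℕ) :
    Module ℚ (MilnorQ F n) :=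
  inferInstanceAs (Module ℚ ((⋀[ℚ]^n (UnitsQ F)) ⧸ MilnorRel F n))

/-- The class of an element of `Λ^n F^×` in `K_n^M(F) ⊗ ℚ`. -/
def MilnorQ.mk {F : Type u} [Field F] {n : ℕ} (x : ⋀[ℚ]^n (UnitsQ F)) : MilnorQ F n :=
  Submodule.Quotient.mk x

end ChowPrelim2

open scoped TensorProduct

universe u

/-!
Milnor's computation of the K-theory of `F(t)`, by induction on the degree of polynomials, gives
two facts about the residues at the closed points of the affine line. They can be prescribed at a
single point (and zero elsewhere), and an element all of whose finite residues vanish comes from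
constants, hence has residue zero at infinity (reciprocity).

Let `a` generate `K` over `F`, with minimal polynomial `π`, so that `K ≃ F[t]/(π)`. If
`x ∈ K_n(F)` dies in `K_n(K)`, then all finite residues of `{π, x}` vanish, and reciprocity at
infinity gives `deg π • x = 0`: the map `K_n(F) → K_n(K)` is injective. For `y ∈ K_n(K)`, choose an
element over `F(t)` with residue `y` at `π` and no other finite residue. Over `K(t)` it has the same
finite residues as `∑ σ, {t - σ a, σ y}`, and comparing residues at infinity shows that `∑ σ, σ y`
comes from `K_n(F)`. An invariant `y` is `|G|⁻¹` times such a sum.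
-/

noncomputable section

section Units

variable {F K L : Type u} [Field F] [Field K] [Field L]
variable {M : Type*} [AddCommGroup M] [Module ℚ M]

lemma mkQ_of_ne_zero {x : F} (hx : x ≠ 0) :
    mkQ x = (1 : ℚ) ⊗ₜ[ℤ] Additive.ofMul (Units.mk0 x hx) := by
  simp [mkQ, hx]

@[simp]
lemma mkQ_zero : mkQ (0 : F) = 0 := by
  simp [mkQ]

lemma mkQ_mul {x y : F} (hx : x ≠ 0) (hy : y ≠ 0) : mkQ (x * y) = mkQ x + mkQ y := by
  rw [mkQ_of_ne_zero hx, mkQ_of_ne_zero hy, mkQ_of_ne_zero (mul_ne_zero hx hy),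
    ← TensorProduct.tmul_add, ← ofMul_mul, Units.mk0_mul]

@[simp]
lemma mkQ_one : mkQ (1 : F) = 0 := by
  simpa using mkQ_mul (one_ne_zero (α := F)) one_ne_zero

lemma mkQ_pow {x : F} (hx : x ≠ 0) (n : ℕ) : mkQ (x ^ n) = (n : ℚ) • mkQ x := by
  induction n with
  | zero => simp
  | succ n ih =>
    rw [pow_succ, mkQ_mul (pow_ne_zero n hx) hx, ih, Nat.cast_succ, add_smul, one_smul]

lemma mkQ_neg (x : F) : mkQ (-x) = mkQ x := by
  rcases eq_or_ne x 0 with rfl | hx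
  · rw [neg_zero]
  · have two_smul_eq : (2 : ℚ) • mkQ (-x) = (2 : ℚ) • mkQ x := by
      exact_mod_cast (mkQ_pow (neg_ne_zero.2 hx) 2).symm.trans
        ((congrArg mkQ (neg_sq x)).trans (mkQ_pow hx 2))
    exact smul_right_injective _ two_ne_zero two_smul_eq

lemma mkQ_div {x y : F} (hx : x ≠ 0) (hy : y ≠ 0) : mkQ (x / y) = mkQ x - mkQ y := by
  rw [eq_sub_iff_add_eq, ← mkQ_mul (div_ne_zero hx hy) hy, div_mul_cancel₀ x hy]

lemma span_mkQ : Submodule.span ℚ {u : UnitsQ F | ∃ x : F, x ≠ 0 ∧ u = mkQ x} = ⊤ := by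
  refine eq_top_iff.2 fun u _ => ?_
  induction u using TensorProduct.induction_on with
  | zero => exact zero_mem _
  | add u v hu hv => exact add_mem (hu trivial) (hv trivial)
  | tmul q x =>
    have tmul_eq : q ⊗ₜ[ℤ] x = q • mkQ (x.toMul : F) := by
      rw [mkQ_of_ne_zero (Units.ne_zero _), TensorProduct.smul_tmul', smul_eq_mul, mul_one,
        Units.mk0_val, ofMul_toMul]
    rw [tmul_eq]
    exact Submodule.smul_mem _ q (Submodule.subset_span ⟨_, Units.ne_zero _, rfl⟩)

namespace UnitsQ

/-- The linear map on `F^× ⊗ ℚ` extending a function on `F` that turns products of nonzero elements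
into sums. -/
def lift (φ : F → M) (hφ : ∀ x y, x ≠ 0 → y ≠ 0 → φ (x * y) = φ x + φ y) : UnitsQ F →ₗ[ℚ] M :=
  TensorProduct.AlgebraTensorModule.lift <| LinearMap.toSpanSingleton ℚ (Additive Fˣ →ₗ[ℤ] M) <|
    AddMonoidHom.toIntLinearMap <| AddMonoidHom.mk' (fun x => φ (x.toMul : Fˣ))
      fun x y => hφ _ _ x.toMul.ne_zero y.toMul.ne_zero

lemma lift_mkQ (φ : F → M) (hφ : ∀ x y, x ≠ 0 → y ≠ 0 → φ (x * y) = φ x + φ y) {x : F}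
    (hx : x ≠ 0) : lift φ hφ (mkQ x) = φ x := by
  simp [lift, mkQ_of_ne_zero hx]

lemma hom_ext {f g : UnitsQ F →ₗ[ℚ] M} (h : ∀ x : F, x ≠ 0 → f (mkQ x) = g (mkQ x)) :
    f = g := by
  refine LinearMap.ext_on span_mkQ ?_
  rintro _ ⟨x, hx, rfl⟩
  exact h x hx

lemma alternatingMap_ext {n : ℕ} {f g : UnitsQ F [⋀^Fin n]→ₗ[ℚ] M}
    (h : ∀ x : Fin n → F, (∀ i, x i ≠ 0) → f (fun i => mkQ (x i)) = g fun i => mkQ (x i)) :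
    f = g := by
  refine exteriorPower.alternatingMapLinearEquiv.injective
    (LinearMap.ext_on (exteriorPower.ιMulti_span_of_span ℚ n _ span_mkQ) ?_)
  rintro _ ⟨v, hv, rfl⟩
  choose x hx hvx using fun i => hv ⟨i, rfl⟩
  obtain rfl : v = fun i => mkQ (x i) := funext hvx
  simpa only [exteriorPower.alternatingMapLinearEquiv_apply_ιMulti] using h x hx

end UnitsQ

lemma unitsQMap_mkQ (j : F →+* K) (x : F) : unitsQMap j (mkQ x) = mkQ (j x) := by
  rcases eq_or_ne x 0 with rfl | hx
  · simp
  · rw [mkQ_of_ne_zero hx, mkQ_of_ne_zero ((map_ne_zero j).2 hx), unitsQMap,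
      LinearMap.baseChange_tmul]
    refine congrArg _ (Additive.toMul.injective (Units.ext ?_))
    rfl

lemma unitsQMap_id (u : UnitsQ F) : unitsQMap (RingHom.id F) u = u := by
  have : unitsQMap (RingHom.id F) = LinearMap.id :=
    UnitsQ.hom_ext fun x _ => unitsQMap_mkQ _ x
  exact LinearMap.congr_fun this u

lemma unitsQMap_unitsQMap (i : K →+* L) (j : F →+* K) (u : UnitsQ F) :
    unitsQMap i (unitsQMap j u) = unitsQMap (i.comp j) u := by
  have : unitsQMap i ∘ₗ unitsQMap j = unitsQMap (i.comp j) :=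
    UnitsQ.hom_ext fun x _ => by
      simp only [LinearMap.comp_apply, unitsQMap_mkQ, RingHom.comp_apply]
  exact LinearMap.congr_fun this u

end Units

lemma alternatingMap_cons_cons_swap {M N : Type*} [AddCommGroup M] [Module ℚ M] [AddCommGroup N]
    [Module ℚ N] {n : ℕ} (φ : M [⋀^Fin (n + 2)]→ₗ[ℚ] N) (a b : M) (v : Fin n → M) :
    φ (Fin.cons a (Fin.cons b v)) = -φ (Fin.cons b (Fin.cons a v)) := by
  rw [← φ.map_swap _ (zero_ne_one (α := Fin (n + 2)))]
  congr 1
  funext i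
  refine Fin.cases (by simp) (Fin.cases (by simp) fun i => ?_) i
  rw [Function.comp_apply, Equiv.swap_apply_of_ne_of_ne (Fin.succ_ne_zero _)
    (Fin.succ_succ_ne_one i)]
  rfl

namespace MilnorQ

variable {F : Type u} [Field F] {n : ℕ} {N : Type*} [AddCommGroup N] [Module ℚ N]

variable (F n) in
/-- The symbol `{u₁, …, uₙ} ∈ K_n^M(F)_ℚ`, as an alternating function of rational units. -/
def symbol : UnitsQ F [⋀^Fin n]→ₗ[ℚ] MilnorQ F n :=
  (MilnorRel F n).mkQ.compAlternatingMap (exteriorPower.ιMulti ℚ n)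

/-- An alternating map on rational units satisfies the Steinberg relation if it vanishes whenever
its first two arguments are the classes of `a` and `b` with `a + b = 1`. -/
def IsSteinberg : {n : ℕ} → (UnitsQ F [⋀^Fin n]→ₗ[ℚ] N) → Prop
  | 0, _ => True
  | 1, _ => True
  | m + 2, φ => ∀ a b : F, a ≠ 0 → b ≠ 0 → a + b = 1 → ∀ v : Fin m → UnitsQ F,
      φ (Fin.cons (mkQ a) (Fin.cons (mkQ b) v)) = 0

lemma wedgeF_cons_cons {m : ℕ} (a b : F) (x : Fin m → F) :
    wedgeF (m + 2) (Fin.cons a (Fin.cons b x)) = exteriorPower.ιMulti ℚ (m + 2)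
      (Fin.cons (mkQ a) (Fin.cons (mkQ b) fun i => mkQ (x i))) :=
  congrArg (exteriorPower.ιMulti ℚ (m + 2)) <| funext fun i =>
    Fin.cases rfl (Fin.cases rfl fun _ => rfl) i

lemma symbol_cons_cons_eq_zero {a b : F} (ha : a ≠ 0) (hb : b ≠ 0) (hab : a + b = 1)
    (v : Fin n → UnitsQ F) :
    symbol F (n + 2) (Fin.cons (mkQ a) (Fin.cons (mkQ b) v)) = 0 := by
  obtain rfl : b = 1 - a := eq_sub_of_add_eq' hab
  have curry_eq_zero : ((symbol F (n + 2)).curryLeft (mkQ a)).curryLeft (mkQ (1 - a)) = 0 :=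
    UnitsQ.alternatingMap_ext fun x hx => (Submodule.Quotient.mk_eq_zero _).2 <|
      Submodule.subset_span
        ⟨a, x, ha, fun h => hb (by rw [h, sub_self]), hx, (wedgeF_cons_cons a (1 - a) x).symm⟩
  exact congrArg (fun φ : UnitsQ F [⋀^Fin n]→ₗ[ℚ] MilnorQ F (n + 2) => φ v) curry_eq_zero

lemma milnorRel_le_ker {φ : UnitsQ F [⋀^Fin n]→ₗ[ℚ] N} (hφ : IsSteinberg φ) :
    MilnorRel F n ≤ LinearMap.ker (exteriorPower.alternatingMapLinearEquiv φ) := by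
  match n with
  | 0 => exact bot_le
  | 1 => exact bot_le
  | m + 2 =>
    refine Submodule.span_le.2 ?_
    rintro _ ⟨a, x, ha, ha1, -, rfl⟩
    rw [wedgeF_cons_cons, SetLike.mem_coe, LinearMap.mem_ker,
      exteriorPower.alternatingMapLinearEquiv_apply_ιMulti]
    exact hφ a (1 - a) ha (sub_ne_zero.2 ha1.symm) (add_sub_cancel a 1) _

/-- The universal property of `K_n^M(F)_ℚ` for alternating maps satisfying the Steinberg
relation. -/
def lift (φ : UnitsQ F [⋀^Fin n]→ₗ[ℚ] N) (hφ : IsSteinberg φ) : MilnorQ F n →ₗ[ℚ] N :=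
  (MilnorRel F n).liftQ (exteriorPower.alternatingMapLinearEquiv φ) (milnorRel_le_ker hφ)

lemma lift_symbol (φ : UnitsQ F [⋀^Fin n]→ₗ[ℚ] N) (hφ : IsSteinberg φ) (v : Fin n → UnitsQ F) :
    lift φ hφ (symbol F n v) = φ v :=
  exteriorPower.alternatingMapLinearEquiv_apply_ιMulti φ v

lemma hom_ext {f g : MilnorQ F n →ₗ[ℚ] N}
    (h : ∀ v : Fin n → UnitsQ F, f (symbol F n v) = g (symbol F n v)) : f = g :=
  Submodule.linearMap_qext _ (exteriorPower.linearMap_ext (AlternatingMap.ext h))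

lemma isSteinberg_curryLeft_symbol (u : UnitsQ F) :
    IsSteinberg ((symbol F (n + 1)).curryLeft u) := by
  match n with
  | 0 => trivial
  | 1 => trivial
  | m + 2 =>
    intro a b ha hb hab v
    calc symbol F (m + 3) (Fin.cons u (Fin.cons (mkQ a) (Fin.cons (mkQ b) v)))
        = -((symbol F (m + 3)).curryLeft (mkQ a)) (Fin.cons u (Fin.cons (mkQ b) v)) :=
          alternatingMap_cons_cons_swap _ _ _ _
      _ = symbol F (m + 3) (Fin.cons (mkQ a) (Fin.cons (mkQ b) (Fin.cons u v))) := by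
          rw [alternatingMap_cons_cons_swap, neg_neg]
          rfl
      _ = 0 := symbol_cons_cons_eq_zero ha hb hab _

/-- The product `x ↦ {u} · x` of Milnor K-theory with a symbol of degree one on the left. -/
def unitMul : UnitsQ F →ₗ[ℚ] MilnorQ F n →ₗ[ℚ] MilnorQ F (n + 1) where
  toFun u := lift ((symbol F (n + 1)).curryLeft u) (isSteinberg_curryLeft_symbol u)
  map_add' u v := hom_ext fun w => by
    simp only [LinearMap.add_apply, lift_symbol, map_add, AlternatingMap.add_apply]
  map_smul' c u := hom_ext fun w => by
    simp only [RingHom.id_apply, LinearMap.smul_apply, lift_symbol, map_smul,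
      AlternatingMap.smul_apply]

lemma unitMul_symbol (u : UnitsQ F) (v : Fin n → UnitsQ F) :
    unitMul u (symbol F n v) = symbol F (n + 1) (Fin.cons u v) :=
  lift_symbol _ (isSteinberg_curryLeft_symbol u) v

lemma symbol_succ (v : Fin (n + 1) → UnitsQ F) :
    symbol F (n + 1) v = unitMul (v 0) (symbol F n (Fin.tail v)) := by
  rw [unitMul_symbol, Fin.cons_self_tail]

lemma hom_ext_unitMul {f g : MilnorQ F (n + 1) →ₗ[ℚ] N}
    (h : ∀ (u : UnitsQ F) (x : MilnorQ F n), f (unitMul u x) = g (unitMul u x)) : f = g :=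
  hom_ext fun v => by rw [symbol_succ, h]

lemma unitMul_anticomm (u v : UnitsQ F) (x : MilnorQ F n) :
    unitMul u (unitMul v x) = -unitMul v (unitMul u x) := by
  have : unitMul u ∘ₗ unitMul (n := n) v = -(unitMul v ∘ₗ unitMul u) :=
    hom_ext fun w => by
      simp only [LinearMap.comp_apply, LinearMap.neg_apply, unitMul_symbol]
      exact alternatingMap_cons_cons_swap _ _ _ _
  exact LinearMap.congr_fun this x

lemma unitMul_unitMul_self (u : UnitsQ F) (x : MilnorQ F n) : unitMul u (unitMul u x) = 0 :=
  have := IsAddTorsionFree.of_module_rat (MilnorQ F (n + 2))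
  self_eq_neg.1 (unitMul_anticomm u u x)

lemma unitMul_unitMul_eq_zero {a b : F} (ha : a ≠ 0) (hb : b ≠ 0) (hab : a + b = 1)
    (x : MilnorQ F n) : unitMul (mkQ a) (unitMul (mkQ b) x) = 0 := by
  have : unitMul (mkQ a) ∘ₗ unitMul (n := n) (mkQ b) = 0 :=
    hom_ext fun w => by
      simp only [LinearMap.comp_apply, LinearMap.zero_apply, unitMul_symbol]
      exact symbol_cons_cons_eq_zero ha hb hab w
  exact LinearMap.congr_fun this x

end MilnorQ

namespace MilnorQ

section SymbolSpan

variable {F : Type u} [Field F] {n : ℕ}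

/-- The subspace of `K_n^M(F)_ℚ` spanned by the symbols whose entries lie in a given subspace of
`F^× ⊗ ℚ`. -/
def symbolSpan (U : Submodule ℚ (UnitsQ F)) (n : ℕ) : Submodule ℚ (MilnorQ F n) :=
  Submodule.span ℚ (symbol F n '' {v | ∀ i, v i ∈ U})

variable {U : Submodule ℚ (UnitsQ F)}

lemma symbol_mem_symbolSpan {v : Fin n → UnitsQ F} (hv : ∀ i, v i ∈ U) :
    symbol F n v ∈ symbolSpan U n :=
  Submodule.subset_span ⟨v, hv, rfl⟩

lemma span_range_symbol : Submodule.span ℚ (Set.range (symbol F n)) = ⊤ := by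
  rw [← Submodule.ker_mkQ (Submodule.span ℚ (Set.range (symbol F n))), LinearMap.ker_eq_top]
  refine hom_ext fun v => (Submodule.Quotient.mk_eq_zero _).2 (Submodule.subset_span ⟨v, rfl⟩)

lemma symbolSpan_zero : symbolSpan U 0 = ⊤ :=
  eq_top_iff.2 <| span_range_symbol.symm.le.trans <|
    Submodule.span_mono fun _ ⟨v, hv⟩ => ⟨v, fun i => i.elim0, hv⟩

lemma symbolSpan_succ : symbolSpan U (n + 1) = Submodule.map₂ unitMul U (symbolSpan U n) := by
  refine le_antisymm (Submodule.span_le.2 ?_) (Submodule.map₂_le.2 fun u hu x hx => ?_)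
  · rintro _ ⟨v, hv, rfl⟩
    rw [symbol_succ]
    exact Submodule.apply_mem_map₂ _ (hv 0) (symbol_mem_symbolSpan fun i => hv i.succ)
  · refine (Submodule.map_span_le (unitMul u) _ _).2 ?_ (Submodule.mem_map_of_mem hx)
    rintro _ ⟨v, hv, rfl⟩
    rw [unitMul_symbol]
    exact symbol_mem_symbolSpan (Fin.cases hu hv)

lemma unitMul_mem_symbolSpan {u : UnitsQ F} (hu : u ∈ U) {x : MilnorQ F n}
    (hx : x ∈ symbolSpan U n) : unitMul u x ∈ symbolSpan U (n + 1) :=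
  symbolSpan_succ.symm.le (Submodule.apply_mem_map₂ _ hu hx)

lemma symbolSpan_mono {V : Submodule ℚ (UnitsQ F)} (hUV : U ≤ V) :
    symbolSpan U n ≤ symbolSpan V n :=
  Submodule.span_mono (Set.image_mono fun _ hv i => hUV (hv i))

lemma exists_mem_symbolSpan {U : ℕ → Submodule ℚ (UnitsQ F)} (hmono : Monotone U)
    (hU : ∀ u, ∃ e, u ∈ U e) (x : MilnorQ F n) : ∃ e, x ∈ symbolSpan (U e) n := by
  have directed : Directed (· ≤ ·) fun e => symbolSpan (U e) n :=
    Monotone.directed_le fun _ _ h => symbolSpan_mono (hmono h)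
  refine (Submodule.mem_iSup_of_directed _ directed).1 ?_
  refine (span_range_symbol.symm.le.trans (Submodule.span_le.2 ?_)) (Submodule.mem_top (x := x))
  rintro _ ⟨v, rfl⟩
  choose e he using fun i => hU (v i)
  exact Submodule.mem_iSup_of_mem (Finset.univ.sup e) <|
    symbol_mem_symbolSpan fun i => hmono (Finset.le_sup (Finset.mem_univ i)) (he i)

end SymbolSpan

section Functoriality

variable {E k l : Type u} [Field E] [Field k] [Field l]

/-- A linear map between rational unit groups is compatible with the Steinberg relations if it sends
`a ⊗ b` with `a + b = 1` to zero in Milnor K-theory. Specialization maps have this property without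
being induced by a homomorphism of fields. -/
def PreservesSteinberg (s : UnitsQ E →ₗ[ℚ] UnitsQ k) : Prop :=
  ∀ a b : E, a ≠ 0 → b ≠ 0 → a + b = 1 → ∀ (n : ℕ) (x : MilnorQ k n),
    unitMul (s (mkQ a)) (unitMul (s (mkQ b)) x) = 0

lemma preservesSteinberg_unitsQMap (j : E →+* k) : PreservesSteinberg (unitsQMap j) := by
  intro a b ha hb hab n x
  rw [unitsQMap_mkQ, unitsQMap_mkQ]
  exact unitMul_unitMul_eq_zero ((map_ne_zero j).2 ha) ((map_ne_zero j).2 hb)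
    (by rw [← map_add, hab, map_one]) x

lemma PreservesSteinberg.isSteinberg {s : UnitsQ E →ₗ[ℚ] UnitsQ k} (hs : PreservesSteinberg s)
    (n : ℕ) : IsSteinberg ((symbol k n).compLinearMap s) := by
  match n with
  | 0 => trivial
  | 1 => trivial
  | m + 2 =>
    intro a b ha hb hab v
    rw [AlternatingMap.compLinearMap_apply, symbol_succ, symbol_succ]
    exact hs a b ha hb hab m _

/-- The map on Milnor K-groups applying `s` to every entry of a symbol. -/
def map {s : UnitsQ E →ₗ[ℚ] UnitsQ k} (hs : PreservesSteinberg s) (n : ℕ) :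
    MilnorQ E n →ₗ[ℚ] MilnorQ k n :=
  lift ((symbol k n).compLinearMap s) (hs.isSteinberg n)

section

variable {s : UnitsQ E →ₗ[ℚ] UnitsQ k} (hs : PreservesSteinberg s) {n : ℕ}

lemma map_symbol (v : Fin n → UnitsQ E) :
    map hs n (symbol E n v) = symbol k n fun i => s (v i) :=
  lift_symbol _ _ v

lemma map_unitMul (u : UnitsQ E) (x : MilnorQ E n) :
    map hs (n + 1) (unitMul u x) = unitMul (s u) (map hs n x) := by
  have : map hs (n + 1) ∘ₗ unitMul u = unitMul (s u) ∘ₗ map hs n :=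
    hom_ext fun w => by
      simp only [LinearMap.comp_apply, unitMul_symbol, map_symbol]
      exact congrArg _ (funext (Fin.cases rfl fun _ => rfl))
  exact LinearMap.congr_fun this x

lemma map_map {t : UnitsQ k →ₗ[ℚ] UnitsQ l} (ht : PreservesSteinberg t)
    {r : UnitsQ E →ₗ[ℚ] UnitsQ l} (hr : PreservesSteinberg r) (h : ∀ u, t (s u) = r u)
    (x : MilnorQ E n) : map ht n (map hs n x) = map hr n x := by
  have : map ht n ∘ₗ map hs n = map hr n :=
    hom_ext fun w => by simp only [LinearMap.comp_apply, map_symbol, h]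
  exact LinearMap.congr_fun this x

lemma map_eq_self {t : UnitsQ E →ₗ[ℚ] UnitsQ E} (ht : PreservesSteinberg t) (h : ∀ u, t u = u)
    (x : MilnorQ E n) : map ht n x = x := by
  have : map ht n = LinearMap.id :=
    hom_ext fun w => by simp only [map_symbol, h, LinearMap.id_apply]
  exact LinearMap.congr_fun this x

lemma map_mem_symbolSpan_range (x : MilnorQ E n) :
    map hs n x ∈ symbolSpan (LinearMap.range s) n := by
  have hx : x ∈ Submodule.span ℚ (Set.range (symbol E n)) := by
    rw [span_range_symbol]
    exact Submodule.mem_top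
  refine (Submodule.map_span_le (map hs n) _ _).2 ?_ (Submodule.mem_map_of_mem hx)
  rintro _ ⟨v, rfl⟩
  rw [map_symbol]
  exact symbol_mem_symbolSpan fun i => LinearMap.mem_range_self s (v i)

end

/-- The map `j_*` on Milnor K-groups induced by a homomorphism of fields. -/
def mapField (j : E →+* k) (n : ℕ) : MilnorQ E n →ₗ[ℚ] MilnorQ k n :=
  map (preservesSteinberg_unitsQMap j) n

lemma mapField_id {n : ℕ} (x : MilnorQ E n) : mapField (RingHom.id E) n x = x :=
  map_eq_self _ unitsQMap_id x

lemma mapField_mapField (i : k →+* l) (j : E →+* k) {n : ℕ} (x : MilnorQ E n) :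
    mapField i n (mapField j n x) = mapField (i.comp j) n x :=
  map_map _ _ _ (unitsQMap_unitsQMap i j) x

lemma eq_mapField (j : E →+* k) {n : ℕ} {f : MilnorQ E n →ₗ[ℚ] MilnorQ k n}
    (hf : ∀ x, f (mk x) = mk (powMap n (unitsQMap j) x)) : f = mapField j n := by
  refine hom_ext fun v => ?_
  have powMap_eq : powMap n (unitsQMap j) (exteriorPower.ιMulti ℚ n v) =
      exteriorPower.ιMulti ℚ n fun i => unitsQMap j (v i) :=
    Subtype.ext (ExteriorAlgebra.map_apply_ιMulti _ v)
  exact (hf _).trans ((congrArg mk powMap_eq).trans (map_symbol _ v).symm)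

end Functoriality

section Residue

variable {E E' k k' : Type u} [Field E] [Field E'] [Field k] [Field k']

/-- A rational valuation `v` together with a specialization map `s` to the units of the residue
field. The last condition says that the tame symbol of `a` and `b` vanishes if `a + b = 1`. -/
structure IsTamePair (v : UnitsQ E →ₗ[ℚ] ℚ) (s : UnitsQ E →ₗ[ℚ] UnitsQ k) : Prop where
  preservesSteinberg : PreservesSteinberg s
  smul_eq_smul : ∀ a b : E, a ≠ 0 → b ≠ 0 → a + b = 1 →
    v (mkQ a) • s (mkQ b) = v (mkQ b) • s (mkQ a)

/-- The tame symbol `∑ᵢ (-1)ⁱ v(uᵢ) {s(u₀), …, s(uᵢ₋₁), s(uᵢ₊₁), …, s(uₙ)}` as an alternating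
map. -/
def residueAlt (v : UnitsQ E →ₗ[ℚ] ℚ) (s : UnitsQ E →ₗ[ℚ] UnitsQ k) (n : ℕ) :
    UnitsQ E [⋀^Fin (n + 1)]→ₗ[ℚ] MilnorQ k n :=
  AlternatingMap.alternatizeUncurryFin (v.smulRight ((symbol k n).compLinearMap s))

section

variable (v : UnitsQ E →ₗ[ℚ] ℚ) (s : UnitsQ E →ₗ[ℚ] UnitsQ k)

lemma residueAlt_zero (w : Fin 1 → UnitsQ E) :
    residueAlt v s 0 w = v (w 0) • symbol k 0 fun i => s (w i.succ) := by
  rw [residueAlt, AlternatingMap.alternatizeUncurryFin_apply, Fin.sum_univ_one, Fin.val_zero,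
    pow_zero, one_smul]
  rfl

lemma residueAlt_cons {n : ℕ} (u : UnitsQ E) (w : Fin (n + 1) → UnitsQ E) :
    residueAlt v s (n + 1) (Fin.cons u w) =
      v u • (symbol k (n + 1) fun i => s (w i)) - unitMul (s u) (residueAlt v s n w) := by
  simp only [residueAlt, AlternatingMap.alternatizeUncurryFin_apply]
  rw [Fin.sum_univ_succ, sub_eq_add_neg, map_sum, ← Finset.sum_neg_distrib]
  congr 1
  · simp
  · refine Finset.sum_congr rfl fun i _ => ?_
    simp only [Fin.cons_succ, LinearMap.smulRight_apply, AlternatingMap.smul_apply,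
      AlternatingMap.compLinearMap_apply, map_zsmul, map_smul, unitMul_symbol, Fin.val_succ,
      pow_succ, mul_neg_one, neg_smul]
    congr 4
    funext l
    refine Fin.cases ?_ (fun l => ?_) l <;> simp [Fin.removeNth]

end

variable {v : UnitsQ E →ₗ[ℚ] ℚ} {s : UnitsQ E →ₗ[ℚ] UnitsQ k}

lemma IsTamePair.smul_unitMul_sub_eq_zero (h : IsTamePair v s) {a b : E} (ha : a ≠ 0) (hb : b ≠ 0)
    (hab : a + b = 1) {n : ℕ} (x : MilnorQ k n) :
    v (mkQ a) • unitMul (s (mkQ b)) x - unitMul (s (mkQ a)) (v (mkQ b) • x) = 0 := by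
  have unitMul_congr := congrArg (fun u => unitMul u x) (h.smul_eq_smul a b ha hb hab)
  simp only [map_smul, LinearMap.smul_apply] at unitMul_congr
  rw [unitMul_congr, map_smul, sub_self]

lemma IsTamePair.isSteinberg (h : IsTamePair v s) (n : ℕ) : IsSteinberg (residueAlt v s n) := by
  match n with
  | 0 => trivial
  | 1 =>
    intro a b ha hb hab w
    rw [residueAlt_cons, residueAlt_zero, symbol_succ]
    exact h.smul_unitMul_sub_eq_zero ha hb hab _
  | m + 2 =>
    intro a b ha hb hab w
    rw [residueAlt_cons, residueAlt_cons, symbol_succ, map_sub,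
      h.preservesSteinberg a b ha hb hab, sub_zero]
    exact h.smul_unitMul_sub_eq_zero ha hb hab _

/-- The residue map `K_{n+1}^M(E)_ℚ → K_n^M(k)_ℚ` of a tame pair. -/
def residue (h : IsTamePair v s) (n : ℕ) : MilnorQ E (n + 1) →ₗ[ℚ] MilnorQ k n :=
  lift (residueAlt v s n) (h.isSteinberg n)

lemma residue_unitMul_zero (h : IsTamePair v s) (u : UnitsQ E) (x : MilnorQ E 0) :
    residue h 0 (unitMul u x) = v u • map h.preservesSteinberg 0 x := by
  have : residue h 0 ∘ₗ unitMul u = v u • map h.preservesSteinberg 0 :=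
    hom_ext fun w => by
      simp only [LinearMap.comp_apply, LinearMap.smul_apply, unitMul_symbol, map_symbol, residue,
        lift_symbol, residueAlt_zero, Fin.cons_zero, Fin.cons_succ]
  exact LinearMap.congr_fun this x

lemma residue_unitMul_succ (h : IsTamePair v s) {n : ℕ} (u : UnitsQ E) (x : MilnorQ E (n + 1)) :
    residue h (n + 1) (unitMul u x) =
      v u • map h.preservesSteinberg (n + 1) x - unitMul (s u) (residue h n x) := by
  have : residue h (n + 1) ∘ₗ unitMul u =
      v u • map h.preservesSteinberg (n + 1) - unitMul (s u) ∘ₗ residue h n :=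
    hom_ext fun w => by
      simp only [LinearMap.comp_apply, LinearMap.smul_apply, LinearMap.sub_apply, unitMul_symbol,
        map_symbol, residue, lift_symbol, residueAlt_cons]
  exact LinearMap.congr_fun this x

lemma residue_unitMul_of_specialization_eq_zero (h : IsTamePair v s) {u : UnitsQ E} (hu : s u = 0)
    {n : ℕ} (x : MilnorQ E n) :
    residue h n (unitMul u x) = v u • map h.preservesSteinberg n x := by
  cases n with
  | zero => exact residue_unitMul_zero h u x
  | succ n => rw [residue_unitMul_succ, hu, map_zero, LinearMap.zero_apply, sub_zero]

lemma residue_unitMul_of_mem_symbolSpan (h : IsTamePair v s) {U : Submodule ℚ (UnitsQ E)}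
    (hU : ∀ w ∈ U, v w = 0) (u : UnitsQ E) {n : ℕ} {x : MilnorQ E n} (hx : x ∈ symbolSpan U n) :
    residue h n (unitMul u x) = v u • map h.preservesSteinberg n x := by
  induction n generalizing u with
  | zero => exact residue_unitMul_zero h u x
  | succ n ih =>
    have residue_eq_zero : symbolSpan U (n + 1) ≤ LinearMap.ker (residue h n) := by
      rw [symbolSpan_succ, Submodule.map₂_le]
      intro w hw y hy
      rw [LinearMap.mem_ker, ih w hy, hU w hw, zero_smul]
    rw [residue_unitMul_succ, LinearMap.mem_ker.1 (residue_eq_zero hx), map_zero, sub_zero]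

lemma residue_eq_zero_of_mem_symbolSpan (h : IsTamePair v s) {U : Submodule ℚ (UnitsQ E)}
    (hU : ∀ w ∈ U, v w = 0) {n : ℕ} {x : MilnorQ E (n + 1)} (hx : x ∈ symbolSpan U (n + 1)) :
    residue h n x = 0 := by
  suffices symbolSpan U (n + 1) ≤ LinearMap.ker (residue h n) from LinearMap.mem_ker.1 (this hx)
  rw [symbolSpan_succ, Submodule.map₂_le]
  intro w hw y hy
  rw [LinearMap.mem_ker, residue_unitMul_of_mem_symbolSpan h hU w hy, hU w hw, zero_smul]

section Compatibility

variable (h : IsTamePair v s) {v' : UnitsQ E' →ₗ[ℚ] ℚ} {s' : UnitsQ E' →ₗ[ℚ] UnitsQ k'}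
  (h' : IsTamePair v' s') {t : UnitsQ E →ₗ[ℚ] UnitsQ E'} (ht : PreservesSteinberg t)
  {i : UnitsQ k →ₗ[ℚ] UnitsQ k'} (hi : PreservesSteinberg i) {w : UnitsQ k'} {n : ℕ}

lemma map_map_zero (x : MilnorQ E 0) :
    map h'.preservesSteinberg 0 (map ht 0 x) = map hi 0 (map h.preservesSteinberg 0 x) := by
  have : map h'.preservesSteinberg 0 ∘ₗ map ht 0 = map hi 0 ∘ₗ map h.preservesSteinberg 0 :=
    hom_ext fun w => by
      simp only [LinearMap.comp_apply, map_symbol]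
      exact congrArg _ (Subsingleton.elim _ _)
  exact LinearMap.congr_fun this x

-- The shift by `w` measures the change of the uniformizer along `t`.
lemma map_specialization_map (hs : ∀ u, s' (t u) = i (s u) + v u • w) (x : MilnorQ E (n + 1)) :
    map h'.preservesSteinberg (n + 1) (map ht (n + 1) x) =
      map hi (n + 1) (map h.preservesSteinberg (n + 1) x) +
        unitMul w (map hi n (residue h n x)) := by
  suffices map h'.preservesSteinberg (n + 1) ∘ₗ map ht (n + 1) =
      map hi (n + 1) ∘ₗ map h.preservesSteinberg (n + 1) +
        unitMul w ∘ₗ map hi n ∘ₗ residue h n from LinearMap.congr_fun this x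
  induction n with
  | zero =>
    refine hom_ext_unitMul fun u y => ?_
    simp only [LinearMap.comp_apply, LinearMap.add_apply, map_unitMul, residue_unitMul_zero, hs,
      map_map_zero h h' ht hi, map_add, map_smul, LinearMap.smul_apply]
  | succ n ih =>
    refine hom_ext_unitMul fun u y => ?_
    have ih_apply := LinearMap.congr_fun (ih y) y
    simp only [LinearMap.comp_apply, LinearMap.add_apply] at ih_apply
    simp only [LinearMap.comp_apply, LinearMap.add_apply, map_unitMul, residue_unitMul_succ, hs,
      ih_apply, map_add, map_smul, LinearMap.smul_apply, map_sub, unitMul_unitMul_self,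
      smul_zero, add_zero, unitMul_anticomm w (i (s u))]
    abel

lemma residue_map {e : ℚ} (hv : ∀ u, v' (t u) = e * v u)
    (hs : ∀ u, s' (t u) = i (s u) + v u • w) (x : MilnorQ E (n + 1)) :
    residue h' n (map ht (n + 1) x) = e • map hi n (residue h n x) := by
  suffices residue h' n ∘ₗ map ht (n + 1) = e • map hi n ∘ₗ residue h n from
    LinearMap.congr_fun this x
  induction n with
  | zero =>
    refine hom_ext_unitMul fun u y => ?_
    simp only [LinearMap.comp_apply, LinearMap.smul_apply, map_unitMul, residue_unitMul_zero, hv,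
      map_map_zero h h' ht hi, mul_smul, map_smul]
  | succ n ih =>
    refine hom_ext_unitMul fun u y => ?_
    have ih_apply := LinearMap.congr_fun (ih y) y
    simp only [LinearMap.comp_apply, LinearMap.smul_apply] at ih_apply
    simp only [LinearMap.comp_apply, LinearMap.smul_apply, map_unitMul, residue_unitMul_succ, hv,
      hs, ih_apply, map_specialization_map h h' ht hi hs, mul_smul, map_add, map_smul,
      LinearMap.add_apply, smul_add, smul_sub, map_sub]
    abel

end Compatibility

end Residue

end MilnorQ

open Polynomial

section RationalFunctions

variable {F : Type u} [Field F]

/-- The class of a polynomial in `F(t)^× ⊗ ℚ`, with junk value `0` at the zero polynomial. -/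
def polyClass (p : F[X]) : UnitsQ (RatFunc F) :=
  mkQ (algebraMap F[X] (RatFunc F) p)

lemma polyClass_mul {p q : F[X]} (hp : p ≠ 0) (hq : q ≠ 0) :
    polyClass (p * q) = polyClass p + polyClass q := by
  rw [polyClass, map_mul,
    mkQ_mul (RatFunc.algebraMap_ne_zero hp) (RatFunc.algebraMap_ne_zero hq)]
  rfl

lemma mkQ_algebraMap_div {p q : F[X]} (hp : p ≠ 0) (hq : q ≠ 0) :
    mkQ (algebraMap F[X] (RatFunc F) p / algebraMap F[X] (RatFunc F) q) =
      polyClass p - polyClass q :=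
  mkQ_div (RatFunc.algebraMap_ne_zero hp) (RatFunc.algebraMap_ne_zero hq)

lemma mkQ_eq_polyClass_num_sub_denom {x : RatFunc F} (hx : x ≠ 0) :
    mkQ x = polyClass x.num - polyClass x.denom := by
  rw [← mkQ_algebraMap_div (RatFunc.num_ne_zero hx) (RatFunc.denom_ne_zero x),
    RatFunc.num_div_denom]

lemma span_polyClass :
    Submodule.span ℚ {u : UnitsQ (RatFunc F) | ∃ p : F[X], p ≠ 0 ∧ u = polyClass p} = ⊤ := by
  rw [eq_top_iff, ← span_mkQ, Submodule.span_le]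
  rintro _ ⟨x, hx, rfl⟩
  rw [mkQ_eq_polyClass_num_sub_denom hx]
  exact sub_mem (Submodule.subset_span ⟨_, RatFunc.num_ne_zero hx, rfl⟩)
    (Submodule.subset_span ⟨_, RatFunc.denom_ne_zero x, rfl⟩)

section Lift

variable {M : Type*} [AddCommGroup M] [Module ℚ M]

lemma hom_ext_polyClass {f g : UnitsQ (RatFunc F) →ₗ[ℚ] M}
    (h : ∀ p : F[X], p ≠ 0 → f (polyClass p) = g (polyClass p)) : f = g := by
  refine LinearMap.ext_on span_polyClass ?_
  rintro _ ⟨p, hp, rfl⟩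
  exact h p hp

/-- The linear map on `F(t)^× ⊗ ℚ` extending a function on `F[t]` that turns products of nonzero
polynomials into sums. -/
def liftPoly (φ : F[X] → M) (hφ : ∀ p q, p ≠ 0 → q ≠ 0 → φ (p * q) = φ p + φ q) :
    UnitsQ (RatFunc F) →ₗ[ℚ] M :=
  UnitsQ.lift (fun x => φ x.num - φ x.denom) fun x y hx hy => by
    have hxy := mul_ne_zero hx hy
    have num_denom := congrArg φ (RatFunc.num_denom_mul x y)
    rw [hφ _ _ (RatFunc.num_ne_zero hxy) (mul_ne_zero x.denom_ne_zero y.denom_ne_zero),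
      hφ _ _ x.denom_ne_zero y.denom_ne_zero,
      hφ _ _ (mul_ne_zero (RatFunc.num_ne_zero hx) (RatFunc.num_ne_zero hy))
        (x * y).denom_ne_zero,
      hφ _ _ (RatFunc.num_ne_zero hx) (RatFunc.num_ne_zero hy), ← eq_sub_iff_add_eq] at num_denom
    rw [num_denom]
    abel

lemma liftPoly_polyClass (φ : F[X] → M)
    (hφ : ∀ p q, p ≠ 0 → q ≠ 0 → φ (p * q) = φ p + φ q) {p : F[X]} (hp : p ≠ 0) :
    liftPoly φ hφ (polyClass p) = φ p := by
  have φ_one : φ 1 = 0 := by simpa using hφ 1 1 one_ne_zero one_ne_zero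
  rw [liftPoly, polyClass, UnitsQ.lift_mkQ _ _ (RatFunc.algebraMap_ne_zero hp),
    RatFunc.num_algebraMap, RatFunc.denom_algebraMap, φ_one, sub_zero]

end Lift

/-- A place of `F(t)` with residue field `k`, presented through polynomials: the order of a
polynomial and the residue of its leading term with respect to a fixed uniformizer. Only the values
at nonzero polynomials matter. -/
structure Place (F k : Type u) [Field F] [Field k] where
  ord : F[X] → ℤ
  lead : F[X] → k
  lead_ne_zero : ∀ p, p ≠ 0 → lead p ≠ 0
  ord_mul : ∀ p q, p ≠ 0 → q ≠ 0 → ord (p * q) = ord p + ord q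
  lead_mul : ∀ p q, p ≠ 0 → q ≠ 0 → lead (p * q) = lead p * lead q
  add_of_lt : ∀ p q, p ≠ 0 → q ≠ 0 → ord p < ord q →
    ord (p + q) = ord p ∧ lead (p + q) = lead p
  add_of_eq : ∀ p q, p ≠ 0 → q ≠ 0 → ord p = ord q → lead p + lead q ≠ 0 →
    ord (p + q) = ord p ∧ lead (p + q) = lead p + lead q

namespace Place

variable {k : Type u} [Field k] (P : Place F k)

/-- The valuation on `F(t)^× ⊗ ℚ` extending the order of polynomials. -/
def valuation : UnitsQ (RatFunc F) →ₗ[ℚ] ℚ :=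
  liftPoly (fun p => (P.ord p : ℚ)) fun p q hp hq => by
    rw [P.ord_mul p q hp hq, Int.cast_add]

/-- The specialization map on `F(t)^× ⊗ ℚ` extending the leading term of polynomials. -/
def specialization : UnitsQ (RatFunc F) →ₗ[ℚ] UnitsQ k :=
  liftPoly (fun p => mkQ (P.lead p)) fun p q hp hq => by
    rw [P.lead_mul p q hp hq, mkQ_mul (P.lead_ne_zero p hp) (P.lead_ne_zero q hq)]

lemma valuation_polyClass {p : F[X]} (hp : p ≠ 0) : P.valuation (polyClass p) = P.ord p :=
  liftPoly_polyClass _ _ hp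

lemma specialization_polyClass {p : F[X]} (hp : p ≠ 0) :
    P.specialization (polyClass p) = mkQ (P.lead p) :=
  liftPoly_polyClass _ _ hp

lemma lead_add_cases {p q : F[X]} (hp : p ≠ 0) (hq : q ≠ 0) :
    (P.ord (p + q) = P.ord p ∧ P.lead (p + q) = P.lead p) ∨
    (P.ord (p + q) = P.ord q ∧ P.lead (p + q) = P.lead q) ∨
    (P.ord p = P.ord q ∧ P.lead p = -P.lead q) ∨
    (P.ord (p + q) = P.ord p ∧ P.ord (p + q) = P.ord q ∧
      P.lead (p + q) = P.lead p + P.lead q) := by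
  rcases lt_trichotomy (P.ord p) (P.ord q) with hlt | heq | hgt
  · exact .inl (P.add_of_lt p q hp hq hlt)
  · rcases eq_or_ne (P.lead p + P.lead q) 0 with hzero | hne
    · exact .inr (.inr (.inl ⟨heq, eq_neg_of_add_eq_zero_left hzero⟩))
    · obtain ⟨hord, hlead⟩ := P.add_of_eq p q hp hq heq hne
      exact .inr (.inr (.inr ⟨hord, hord.trans heq, hlead⟩))
  · exact .inr (.inl (add_comm p q ▸ P.add_of_lt q p hq hp hgt))

lemma valuation_specialization_cases {a b : RatFunc F} (ha : a ≠ 0) (hb : b ≠ 0)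
    (hab : a + b = 1) :
    (P.valuation (mkQ a) = 0 ∧ P.specialization (mkQ a) = 0) ∨
    (P.valuation (mkQ b) = 0 ∧ P.specialization (mkQ b) = 0) ∨
    (P.valuation (mkQ a) = P.valuation (mkQ b) ∧
      P.specialization (mkQ a) = P.specialization (mkQ b)) ∨
    (P.valuation (mkQ a) = 0 ∧ P.valuation (mkQ b) = 0 ∧ ∃ α β : k, α ≠ 0 ∧ β ≠ 0 ∧
      α + β = 1 ∧ P.specialization (mkQ a) = mkQ α ∧ P.specialization (mkQ b) = mkQ β) := by
  have hp := RatFunc.num_ne_zero ha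
  have hr := a.denom_ne_zero
  have b_eq : b = algebraMap F[X] (RatFunc F) (a.denom - a.num) /
      algebraMap F[X] (RatFunc F) a.denom := by
    rw [map_sub, sub_div, div_self (RatFunc.algebraMap_ne_zero hr), RatFunc.num_div_denom]
    exact eq_sub_of_add_eq' hab
  have hq : a.denom - a.num ≠ 0 := fun h => hb (by rw [b_eq, h, map_zero, zero_div])
  rw [mkQ_eq_polyClass_num_sub_denom ha, b_eq, mkQ_algebraMap_div hq hr]
  simp only [map_sub, P.valuation_polyClass hp, P.valuation_polyClass hq,
    P.valuation_polyClass hr, P.specialization_polyClass hp, P.specialization_polyClass hq,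
    P.specialization_polyClass hr]
  have cases := P.lead_add_cases hp hq
  rw [add_sub_cancel] at cases
  rcases cases with ⟨hord, hlead⟩ | ⟨hord, hlead⟩ | ⟨hord, hlead⟩ | ⟨hp_ord, hq_ord, hlead⟩
  · exact .inl ⟨by rw [hord, sub_self], by rw [hlead, sub_self]⟩
  · exact .inr (.inl ⟨by rw [hord, sub_self], by rw [hlead, sub_self]⟩)
  · exact .inr (.inr (.inl ⟨by rw [hord], by rw [hlead, mkQ_neg]⟩))
  · have hp' := P.lead_ne_zero _ hp
    have hq' := P.lead_ne_zero _ hq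
    have hr' := P.lead_ne_zero _ hr
    exact .inr (.inr (.inr ⟨by rw [hp_ord, sub_self], by rw [hq_ord, sub_self],
      _, _, div_ne_zero hp' hr', div_ne_zero hq' hr', by rw [← add_div, ← hlead, div_self hr'],
      (mkQ_div hp' hr').symm, (mkQ_div hq' hr').symm⟩))

lemma isTamePair : MilnorQ.IsTamePair P.valuation P.specialization where
  preservesSteinberg a b ha hb hab n x := by
    rcases P.valuation_specialization_cases ha hb hab with
      ⟨-, ha₀⟩ | ⟨-, hb₀⟩ | ⟨-, heq⟩ | ⟨-, -, α, β, hα, hβ, hαβ, ha', hb'⟩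
    · rw [ha₀, map_zero, LinearMap.zero_apply]
    · rw [hb₀, map_zero, LinearMap.zero_apply, map_zero]
    · rw [heq, MilnorQ.unitMul_unitMul_self]
    · rw [ha', hb', MilnorQ.unitMul_unitMul_eq_zero hα hβ hαβ]
  smul_eq_smul a b ha hb hab := by
    rcases P.valuation_specialization_cases ha hb hab with
      ⟨hva, hsa⟩ | ⟨hvb, hsb⟩ | ⟨hv, hs⟩ | ⟨hva, hvb, -⟩
    · rw [hva, hsa, zero_smul, smul_zero]
    · rw [hvb, hsb, zero_smul, smul_zero]
    · rw [hv, hs]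
    · rw [hva, hvb, zero_smul, zero_smul]

/-- The specialization map on Milnor K-theory at a place of `F(t)`. -/
def specialize (n : ℕ) : MilnorQ (RatFunc F) n →ₗ[ℚ] MilnorQ k n :=
  MilnorQ.map P.isTamePair.preservesSteinberg n

/-- The residue map on Milnor K-theory at a place of `F(t)`. -/
def residue (n : ℕ) : MilnorQ (RatFunc F) (n + 1) →ₗ[ℚ] MilnorQ k n :=
  MilnorQ.residue P.isTamePair n

end Place

variable (F) in
/-- The place of `F(t)` at infinity, with uniformizer `1/t`. -/
def placeAtInfinity : Place F F where
  ord p := -(p.natDegree : ℤ)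
  lead := leadingCoeff
  lead_ne_zero _ hp := leadingCoeff_ne_zero.2 hp
  ord_mul p q hp hq := by rw [natDegree_mul hp hq]; push_cast; ring
  lead_mul p q _ _ := leadingCoeff_mul p q
  add_of_lt p q _ _ hlt := by
    have hdeg : q.natDegree < p.natDegree := by omega
    exact ⟨by rw [natDegree_add_eq_left_of_natDegree_lt hdeg],
      leadingCoeff_add_of_degree_lt' (degree_lt_degree hdeg)⟩
  add_of_eq p q hp hq heq hne := by
    have hdeg : p.natDegree = q.natDegree := by omega
    have hdegree : p.degree = q.degree := by
      rw [degree_eq_natDegree hp, degree_eq_natDegree hq, hdeg]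
    have hlead := leadingCoeff_add_of_degree_eq hdegree hne
    refine ⟨?_, hlead⟩
    have hdegree_add := degree_add_eq_of_leadingCoeff_add_ne_zero hne
    rw [← hdegree, max_self] at hdegree_add
    rw [natDegree_eq_of_degree_eq hdegree_add]

section FinitePlace

variable {k : Type u} [Field k] [Algebra F k] {θ : k}

lemma exists_eq_minpoly_pow_mul (hθ : IsIntegral F θ) {p : F[X]} (hp : p ≠ 0) :
    ∃ (m : ℕ) (g : F[X]), p = minpoly F θ ^ m * g ∧ aeval θ g ≠ 0 := by
  have finite := FiniteMultiplicity.of_prime_left (minpoly.prime hθ) hp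
  obtain ⟨g, hg, not_dvd⟩ := finite.exists_eq_pow_mul_and_not_dvd
  exact ⟨_, g, hg, fun h => not_dvd (minpoly.dvd F θ h)⟩

/-- The order of a polynomial at the closed point of the affine line defined by `θ`. -/
def ordAt (F : Type u) [Field F] {k : Type u} [Field k] [Algebra F k] (θ : k) (p : F[X]) : ℕ :=
  multiplicity (minpoly F θ) p

/-- The value at `θ` of a polynomial divided by the highest possible power of the uniformizer
`minpoly F θ`. -/
def leadAt (F : Type u) [Field F] {k : Type u} [Field k] [Algebra F k] (θ : k) (p : F[X]) : k :=
  aeval θ (p / minpoly F θ ^ ordAt F θ p)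

variable (hθ : IsIntegral F θ) {m : ℕ} {g : F[X]}

include hθ

lemma ordAt_minpoly_pow_mul (hg : aeval θ g ≠ 0) : ordAt F θ (minpoly F θ ^ m * g) = m := by
  refine multiplicity_eq_of_dvd_of_not_dvd (dvd_mul_right _ _) fun h => hg ?_
  rw [pow_succ, mul_dvd_mul_iff_left (pow_ne_zero m (minpoly.ne_zero hθ))] at h
  exact (minpoly.dvd_iff).1 h

lemma leadAt_minpoly_pow_mul (hg : aeval θ g ≠ 0) :
    leadAt F θ (minpoly F θ ^ m * g) = aeval θ g := by
  rw [leadAt, ordAt_minpoly_pow_mul hθ hg,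
    mul_div_cancel_left₀ g (pow_ne_zero m (minpoly.ne_zero hθ))]

lemma ordAt_leadAt_mul {p q : F[X]} (hp : p ≠ 0) (hq : q ≠ 0) :
    ordAt F θ (p * q) = ordAt F θ p + ordAt F θ q ∧
      leadAt F θ (p * q) = leadAt F θ p * leadAt F θ q := by
  obtain ⟨i, p, rfl, hp'⟩ := exists_eq_minpoly_pow_mul hθ hp
  obtain ⟨j, q, rfl, hq'⟩ := exists_eq_minpoly_pow_mul hθ hq
  have hpq : aeval θ (p * q) ≠ 0 := by rw [map_mul]; exact mul_ne_zero hp' hq'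
  have mul_eq : minpoly F θ ^ i * p * (minpoly F θ ^ j * q) = minpoly F θ ^ (i + j) * (p * q) := by
    ring
  rw [mul_eq, ordAt_minpoly_pow_mul hθ hpq, ordAt_minpoly_pow_mul hθ hp',
    ordAt_minpoly_pow_mul hθ hq', leadAt_minpoly_pow_mul hθ hpq, leadAt_minpoly_pow_mul hθ hp',
    leadAt_minpoly_pow_mul hθ hq', map_mul]
  exact ⟨rfl, rfl⟩

lemma ordAt_leadAt_add_of_lt {p q : F[X]} (hp : p ≠ 0) (hq : q ≠ 0)
    (hlt : ordAt F θ p < ordAt F θ q) :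
    ordAt F θ (p + q) = ordAt F θ p ∧ leadAt F θ (p + q) = leadAt F θ p := by
  obtain ⟨i, p, rfl, hp'⟩ := exists_eq_minpoly_pow_mul hθ hp
  obtain ⟨j, q, rfl, hq'⟩ := exists_eq_minpoly_pow_mul hθ hq
  rw [ordAt_minpoly_pow_mul hθ hp', ordAt_minpoly_pow_mul hθ hq'] at hlt
  obtain ⟨c, rfl⟩ := Nat.exists_eq_add_of_lt hlt
  have add_eq : minpoly F θ ^ i * p + minpoly F θ ^ (i + c + 1) * q =
      minpoly F θ ^ i * (p + minpoly F θ * (minpoly F θ ^ c * q)) := by ring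
  have aeval_eq : aeval θ (p + minpoly F θ * (minpoly F θ ^ c * q)) = aeval θ p := by
    rw [map_add, map_mul, minpoly.aeval, zero_mul, add_zero]
  have aeval_ne_zero := aeval_eq.trans_ne hp'
  rw [add_eq, ordAt_minpoly_pow_mul hθ aeval_ne_zero, ordAt_minpoly_pow_mul hθ hp',
    leadAt_minpoly_pow_mul hθ aeval_ne_zero, leadAt_minpoly_pow_mul hθ hp']
  exact ⟨rfl, aeval_eq⟩

lemma ordAt_leadAt_add_of_eq {p q : F[X]} (hp : p ≠ 0) (hq : q ≠ 0)
    (heq : ordAt F θ p = ordAt F θ q) (hne : leadAt F θ p + leadAt F θ q ≠ 0) :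
    ordAt F θ (p + q) = ordAt F θ p ∧ leadAt F θ (p + q) = leadAt F θ p + leadAt F θ q := by
  obtain ⟨i, p, rfl, hp'⟩ := exists_eq_minpoly_pow_mul hθ hp
  obtain ⟨j, q, rfl, hq'⟩ := exists_eq_minpoly_pow_mul hθ hq
  rw [leadAt_minpoly_pow_mul hθ hp', leadAt_minpoly_pow_mul hθ hq', ← map_add] at hne
  rw [ordAt_minpoly_pow_mul hθ hp', ordAt_minpoly_pow_mul hθ hq'] at heq
  rw [← heq, ← mul_add, ordAt_minpoly_pow_mul hθ hne, ordAt_minpoly_pow_mul hθ hp',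
    leadAt_minpoly_pow_mul hθ hne, leadAt_minpoly_pow_mul hθ hp', leadAt_minpoly_pow_mul hθ hq']
  exact ⟨rfl, map_add _ p q⟩

/-- The place of `F(t)` at the closed point of the affine line defined by an element `θ` integral
over `F`, with uniformizer `minpoly F θ`. The residue field `k` may be larger than `F(θ)`. -/
def placeAt : Place F k where
  ord p := ordAt F θ p
  lead := leadAt F θ
  lead_ne_zero p hp := by
    obtain ⟨m, g, rfl, hg⟩ := exists_eq_minpoly_pow_mul hθ hp
    rwa [leadAt_minpoly_pow_mul hθ hg]
  ord_mul p q hp hq := by exact_mod_cast (ordAt_leadAt_mul hθ hp hq).1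
  lead_mul p q hp hq := (ordAt_leadAt_mul hθ hp hq).2
  add_of_lt p q hp hq hlt := by exact_mod_cast ordAt_leadAt_add_of_lt hθ hp hq (by omega)
  add_of_eq p q hp hq heq hne := by
    exact_mod_cast ordAt_leadAt_add_of_eq hθ hp hq (by omega) hne

lemma valuation_placeAt {p : F[X]} (hp : p ≠ 0) :
    (placeAt hθ).valuation (polyClass p) = ordAt F θ p :=
  (placeAt hθ).valuation_polyClass hp

lemma specialization_placeAt {p : F[X]} (hp : p ≠ 0) :
    (placeAt hθ).specialization (polyClass p) = mkQ (leadAt F θ p) :=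
  (placeAt hθ).specialization_polyClass hp

lemma valuation_placeAt_of_aeval_ne_zero (hg : aeval θ g ≠ 0) :
    (placeAt hθ).valuation (polyClass g) = 0 := by
  have hg₀ : g ≠ 0 := by rintro rfl; exact hg (map_zero _)
  rw [valuation_placeAt hθ hg₀, ← one_mul g, ← pow_zero (minpoly F θ),
    ordAt_minpoly_pow_mul hθ hg, Nat.cast_zero]

lemma specialization_placeAt_of_aeval_ne_zero (hg : aeval θ g ≠ 0) :
    (placeAt hθ).specialization (polyClass g) = mkQ (aeval θ g) := by
  have hg₀ : g ≠ 0 := by rintro rfl; exact hg (map_zero _)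
  have lead_eq := leadAt_minpoly_pow_mul hθ (m := 0) hg
  rw [pow_zero, one_mul] at lead_eq
  rw [specialization_placeAt hθ hg₀, lead_eq]

lemma valuation_placeAt_minpoly : (placeAt hθ).valuation (polyClass (minpoly F θ)) = 1 := by
  have ord_eq := ordAt_minpoly_pow_mul hθ (m := 1) (g := 1) (by simp)
  rw [pow_one, mul_one] at ord_eq
  rw [valuation_placeAt hθ (minpoly.ne_zero hθ), ord_eq, Nat.cast_one]

lemma specialization_placeAt_minpoly :
    (placeAt hθ).specialization (polyClass (minpoly F θ)) = 0 := by
  have lead_eq := leadAt_minpoly_pow_mul hθ (m := 1) (g := 1) (by simp)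
  rw [pow_one, mul_one, map_one] at lead_eq
  rw [specialization_placeAt hθ (minpoly.ne_zero hθ), lead_eq, mkQ_one]

end FinitePlace

end RationalFunctions

section DegreeFiltration

variable {F : Type u} [Field F]

variable (F) in
/-- The subspace of `F(t)^× ⊗ ℚ` spanned by the polynomials of degree at most `e`. -/
def unitsDegLE (e : ℕ) : Submodule ℚ (UnitsQ (RatFunc F)) :=
  Submodule.span ℚ {u | ∃ p : F[X], p ≠ 0 ∧ p.natDegree ≤ e ∧ u = polyClass p}

lemma polyClass_mem_unitsDegLE {p : F[X]} {e : ℕ} (hp : p ≠ 0) (hdeg : p.natDegree ≤ e) :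
    polyClass p ∈ unitsDegLE F e :=
  Submodule.subset_span ⟨p, hp, hdeg, rfl⟩

lemma unitsDegLE_mono : Monotone (unitsDegLE F) := fun _ _ hle =>
  Submodule.span_mono fun _ ⟨p, hp, hdeg, hu⟩ => ⟨p, hp, hdeg.trans hle, hu⟩

lemma exists_mem_unitsDegLE (u : UnitsQ (RatFunc F)) : ∃ e, u ∈ unitsDegLE F e := by
  refine (Submodule.mem_iSup_of_directed _ unitsDegLE_mono.directed_le).1 ?_
  refine (span_polyClass.symm.le.trans (Submodule.span_le.2 ?_)) (Submodule.mem_top (x := u))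
  rintro _ ⟨p, hp, rfl⟩
  exact Submodule.mem_iSup_of_mem p.natDegree (polyClass_mem_unitsDegLE hp le_rfl)

variable (F) in
/-- The degree filtration on the Milnor K-theory of `F(t)`: the span of the symbols in polynomials
of degree at most `e`. -/
def milnorDegLE (e n : ℕ) : Submodule ℚ (MilnorQ (RatFunc F) n) :=
  MilnorQ.symbolSpan (unitsDegLE F e) n

lemma milnorDegLE_mono (n : ℕ) : Monotone fun e => milnorDegLE F e n := fun _ _ hle =>
  MilnorQ.symbolSpan_mono (unitsDegLE_mono hle)

lemma exists_mem_milnorDegLE {n : ℕ} (x : MilnorQ (RatFunc F) n) : ∃ e, x ∈ milnorDegLE F e n :=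
  MilnorQ.exists_mem_symbolSpan unitsDegLE_mono exists_mem_unitsDegLE x

lemma unitMul_mem_milnorDegLE {e n : ℕ} {u : UnitsQ (RatFunc F)} (hu : u ∈ unitsDegLE F e)
    {x : MilnorQ (RatFunc F) n} (hx : x ∈ milnorDegLE F e n) :
    MilnorQ.unitMul u x ∈ milnorDegLE F e (n + 1) :=
  MilnorQ.unitMul_mem_symbolSpan hu hx

section FinitePlace

variable {k : Type u} [Field k] [Algebra F k] {θ : k} {e n : ℕ}

lemma aeval_ne_zero_of_natDegree_lt {g : F[X]} (hg : g ≠ 0)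
    (hdeg : g.natDegree < (minpoly F θ).natDegree) : aeval θ g ≠ 0 := fun h =>
  hdeg.not_ge (natDegree_le_natDegree (minpoly.degree_le_of_ne_zero F θ hg h))

lemma valuation_placeAt_eq_zero_of_mem_unitsDegLE (hθ : IsIntegral F θ)
    (he : e < (minpoly F θ).natDegree) {u : UnitsQ (RatFunc F)} (hu : u ∈ unitsDegLE F e) :
    (placeAt hθ).valuation u = 0 := by
  suffices unitsDegLE F e ≤ LinearMap.ker (placeAt hθ).valuation from this hu
  refine Submodule.span_le.2 ?_
  rintro _ ⟨p, hp, hdeg, rfl⟩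
  exact valuation_placeAt_of_aeval_ne_zero hθ (aeval_ne_zero_of_natDegree_lt hp (by omega))

lemma eq_of_aeval_eq (he : e < (minpoly F θ).natDegree) {g g' : F[X]} (hg : g.natDegree ≤ e)
    (hg' : g'.natDegree ≤ e) (h : aeval θ g = aeval θ g') : g = g' := by
  by_contra hne
  have hdeg := natDegree_sub_le_of_le hg hg'
  rw [max_self] at hdeg
  refine aeval_ne_zero_of_natDegree_lt (θ := θ) (sub_ne_zero.2 hne) (by omega) ?_
  rw [map_sub, h, sub_self]

lemma exists_aeval_eq (hθ : IsIntegral F θ) (hgen : Function.Surjective (aeval (R := F) θ))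
    (he : (minpoly F θ).natDegree = e + 1) {z : k} (hz : z ≠ 0) :
    ∃ g : F[X], g ≠ 0 ∧ g.natDegree ≤ e ∧ aeval θ g = z := by
  obtain ⟨g, rfl⟩ := hgen z
  have aeval_mod : aeval θ (g %ₘ minpoly F θ) = aeval θ g :=
    aeval_modByMonic_eq_self_of_root (minpoly.aeval F θ)
  refine ⟨g %ₘ minpoly F θ, fun h => hz ?_, ?_, aeval_mod⟩
  · rw [← aeval_mod, h, map_zero]
  · have := natDegree_modByMonic_lt g (minpoly.monic hθ) (minpoly.ne_one F θ)
    omega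

/-- The relations `{g} = {g'} + {g''}` between polynomials of degree at most `e` that hold after
evaluation at `θ`. -/
def evalRelations (F : Type u) [Field F] {k : Type u} [Field k] [Algebra F k] (θ : k) (e : ℕ) :
    Submodule ℚ (UnitsQ (RatFunc F)) :=
  Submodule.span ℚ {u | ∃ g g' g'' : F[X], g ≠ 0 ∧ g' ≠ 0 ∧ g'' ≠ 0 ∧ g.natDegree ≤ e ∧
    g'.natDegree ≤ e ∧ g''.natDegree ≤ e ∧ aeval θ g = aeval θ g' * aeval θ g'' ∧
    u = polyClass g - (polyClass g' + polyClass g'')}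

section

variable (hθ : IsIntegral F θ) (hgen : Function.Surjective (aeval (R := F) θ))
  (he : (minpoly F θ).natDegree = e + 1)

include hgen he

lemma mem_evalRelations {u : UnitsQ (RatFunc F)} (hu : u ∈ unitsDegLE F e)
    (hs : (placeAt hθ).specialization u = 0) : u ∈ evalRelations F θ e := by
  choose! r hr_ne hr_deg hr using fun z hz => exists_aeval_eq hθ hgen he (z := z) hz
  let inverse : UnitsQ k →ₗ[ℚ] UnitsQ (RatFunc F) ⧸ evalRelations F θ e :=
    UnitsQ.lift (fun z => (evalRelations F θ e).mkQ (polyClass (r z))) fun x y hx hy => by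
      have hxy := mul_ne_zero hx hy
      rw [← map_add, ← sub_eq_zero, ← map_sub]
      exact (Submodule.Quotient.mk_eq_zero _).2 <| Submodule.subset_span
        ⟨_, _, _, hr_ne _ hxy, hr_ne _ hx, hr_ne _ hy, hr_deg _ hxy, hr_deg _ hx, hr_deg _ hy,
          by rw [hr _ hxy, hr _ hx, hr _ hy], rfl⟩
  have inverse_specialization : unitsDegLE F e ≤
      LinearMap.eqLocus (inverse ∘ₗ (placeAt hθ).specialization) (evalRelations F θ e).mkQ := by
    refine Submodule.span_le.2 ?_
    rintro _ ⟨p, hp, hdeg, rfl⟩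
    have hp' : aeval θ p ≠ 0 := aeval_ne_zero_of_natDegree_lt hp (by omega)
    have hrp : r (aeval θ p) = p := eq_of_aeval_eq (by omega) (hr_deg _ hp') hdeg (hr _ hp')
    rw [SetLike.mem_coe, LinearMap.mem_eqLocus, LinearMap.comp_apply,
      specialization_placeAt_of_aeval_ne_zero hθ hp', UnitsQ.lift_mkQ _ _ hp', hrp]
  have mkQ_eq := LinearMap.mem_eqLocus.1 (inverse_specialization hu)
  rw [LinearMap.comp_apply, hs, map_zero] at mkQ_eq
  exact (Submodule.Quotient.mk_eq_zero _).1 mkQ_eq.symm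

lemma exists_specialization_section : ∃ τ : UnitsQ k →ₗ[ℚ] UnitsQ (RatFunc F),
    (∀ z, τ z ∈ unitsDegLE F e) ∧ ∀ z, (placeAt hθ).specialization (τ z) = z := by
  have range_eq_top :
      LinearMap.range ((placeAt hθ).specialization ∘ₗ (unitsDegLE F e).subtype) = ⊤ := by
    rw [eq_top_iff, ← span_mkQ, Submodule.span_le]
    rintro _ ⟨z, hz, rfl⟩
    obtain ⟨g, hg, hdeg, rfl⟩ := exists_aeval_eq hθ hgen he hz
    exact ⟨⟨polyClass g, polyClass_mem_unitsDegLE hg hdeg⟩,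
      specialization_placeAt_of_aeval_ne_zero hθ hz⟩
  obtain ⟨τ, hτ⟩ := LinearMap.exists_rightInverse_of_surjective _ range_eq_top
  exact ⟨(unitsDegLE F e).subtype ∘ₗ τ, fun z => (τ z).2, LinearMap.congr_fun hτ⟩

lemma exists_mem_milnorDegLE_specialize_eq (y : MilnorQ k n) :
    ∃ x ∈ milnorDegLE F e n, (placeAt hθ).specialize n x = y := by
  obtain ⟨τ, hτ_mem, hτ⟩ := exists_specialization_section hθ hgen he
  suffices ⊤ ≤ (milnorDegLE F e n).map ((placeAt hθ).specialize n) from this Submodule.mem_top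
  rw [← MilnorQ.span_range_symbol, Submodule.span_le]
  rintro _ ⟨v, rfl⟩
  refine ⟨_, MilnorQ.symbol_mem_symbolSpan fun i => hτ_mem (v i), ?_⟩
  simp only [Place.specialize, MilnorQ.map_symbol, hτ]

end

/- If `g' g'' - g = π f`, the Steinberg relation of `π f / (g' g'') + g / (g' g'') = 1` expresses
`{π, g / (g' g'')}` through polynomials of degree at most `e`. -/
lemma unitMul_minpoly_evalRelation_mem (hθ : IsIntegral F θ)
    (he : (minpoly F θ).natDegree = e + 1) {g g' g'' : F[X]} (hg : g ≠ 0) (hg' : g' ≠ 0)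
    (hg'' : g'' ≠ 0) (hdeg : g.natDegree ≤ e) (hdeg' : g'.natDegree ≤ e)
    (hdeg'' : g''.natDegree ≤ e) (heval : aeval θ g = aeval θ g' * aeval θ g'')
    {x : MilnorQ (RatFunc F) n} (hx : x ∈ milnorDegLE F e n) :
    MilnorQ.unitMul (polyClass (minpoly F θ))
      (MilnorQ.unitMul (polyClass g - (polyClass g' + polyClass g'')) x) ∈
        milnorDegLE F e (n + 2) := by
  obtain ⟨f, hf⟩ : minpoly F θ ∣ g' * g'' - g :=
    minpoly.dvd F θ (by rw [map_sub, map_mul, heval, sub_self])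
  have hπ := minpoly.ne_zero hθ
  have hprod := mul_ne_zero hg' hg''
  rcases eq_or_ne f 0 with rfl | hf_ne
  · rw [mul_zero, sub_eq_zero] at hf
    rw [← hf, polyClass_mul hg' hg'', sub_self, map_zero, LinearMap.zero_apply, map_zero]
    exact zero_mem _
  have hπf := mul_ne_zero hπ hf_ne
  have hf_deg : f.natDegree ≤ e := by
    have := natDegree_sub_le (g' * g'') g
    rw [hf, natDegree_mul hπ hf_ne, natDegree_mul hg' hg'', he] at this
    omega
  have steinberg := MilnorQ.unitMul_unitMul_eq_zero
    (div_ne_zero (RatFunc.algebraMap_ne_zero hπf) (RatFunc.algebraMap_ne_zero hprod))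
    (div_ne_zero (RatFunc.algebraMap_ne_zero hg) (RatFunc.algebraMap_ne_zero hprod))
    (by rw [← add_div, ← map_add, ← hf, sub_add_cancel,
      div_self (RatFunc.algebraMap_ne_zero hprod)]) x
  rw [mkQ_algebraMap_div hπf hprod, mkQ_algebraMap_div hg hprod, polyClass_mul hπ hf_ne,
    polyClass_mul hg' hg'', add_sub_assoc, map_add, LinearMap.add_apply] at steinberg
  rw [eq_neg_of_add_eq_zero_left steinberg]
  have hg'g''_mem := add_mem (polyClass_mem_unitsDegLE hg' hdeg')
    (polyClass_mem_unitsDegLE hg'' hdeg'')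
  exact neg_mem <| unitMul_mem_milnorDegLE
    (sub_mem (polyClass_mem_unitsDegLE hf_ne hf_deg) hg'g''_mem)
    (unitMul_mem_milnorDegLE (sub_mem (polyClass_mem_unitsDegLE hg hdeg) hg'g''_mem) hx)

variable (hθ : IsIntegral F θ) (hgen : Function.Surjective (aeval (R := F) θ))
  (he : (minpoly F θ).natDegree = e + 1)

include hgen he

lemma unitMul_minpoly_unitMul_mem {u : UnitsQ (RatFunc F)} (hu : u ∈ unitsDegLE F e)
    (hs : (placeAt hθ).specialization u = 0) {x : MilnorQ (RatFunc F) n}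
    (hx : x ∈ milnorDegLE F e n) :
    MilnorQ.unitMul (polyClass (minpoly F θ)) (MilnorQ.unitMul u x) ∈ milnorDegLE F e (n + 2) := by
  suffices evalRelations F θ e ≤ (milnorDegLE F e (n + 2)).comap
      (MilnorQ.unitMul (polyClass (minpoly F θ)) ∘ₗ MilnorQ.unitMul.flip x) from
    this (mem_evalRelations hθ hgen he hu hs)
  refine Submodule.span_le.2 ?_
  rintro _ ⟨g, g', g'', hg, hg', hg'', hdeg, hdeg', hdeg'', heval, rfl⟩
  exact unitMul_minpoly_evalRelation_mem hθ he hg hg' hg'' hdeg hdeg' hdeg'' heval hx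

lemma unitMul_minpoly_symbol_sub_symbol_mem {v w : Fin n → UnitsQ (RatFunc F)}
    (hv : ∀ i, v i ∈ unitsDegLE F e) (hw : ∀ i, w i ∈ unitsDegLE F e)
    (hvw : ∀ i, (placeAt hθ).specialization (v i) = (placeAt hθ).specialization (w i)) :
    MilnorQ.unitMul (polyClass (minpoly F θ)) (MilnorQ.symbol _ n v - MilnorQ.symbol _ n w) ∈
      milnorDegLE F e (n + 1) := by
  induction n with
  | zero =>
    rw [Subsingleton.elim v w, sub_self, map_zero]
    exact zero_mem _
  | succ n ih =>
    have telescope : MilnorQ.symbol _ (n + 1) v - MilnorQ.symbol _ (n + 1) w =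
        MilnorQ.unitMul (v 0 - w 0) (MilnorQ.symbol _ n (Fin.tail v)) +
          MilnorQ.unitMul (w 0)
            (MilnorQ.symbol _ n (Fin.tail v) - MilnorQ.symbol _ n (Fin.tail w)) := by
      rw [MilnorQ.symbol_succ v, MilnorQ.symbol_succ w, map_sub, map_sub, LinearMap.sub_apply]
      abel
    rw [telescope, map_add, MilnorQ.unitMul_anticomm _ (w 0)]
    refine add_mem ?_ (neg_mem (unitMul_mem_milnorDegLE (hw 0)
      (ih (fun i => hv i.succ) (fun i => hw i.succ) fun i => hvw i.succ)))
    exact unitMul_minpoly_unitMul_mem hθ hgen he (sub_mem (hv 0) (hw 0))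
      (by rw [map_sub, hvw, sub_self]) (MilnorQ.symbol_mem_symbolSpan fun i => hv i.succ)

lemma isSteinberg_unitMul_minpoly_symbol_section {τ : UnitsQ k →ₗ[ℚ] UnitsQ (RatFunc F)}
    (hτ_mem : ∀ z, τ z ∈ unitsDegLE F e) (hτ : ∀ z, (placeAt hθ).specialization (τ z) = z) :
    MilnorQ.IsSteinberg (((milnorDegLE F e (n + 1)).mkQ ∘ₗ
      MilnorQ.unitMul (polyClass (minpoly F θ))).compAlternatingMap
        ((MilnorQ.symbol _ n).compLinearMap τ)) := by
  match n with
  | 0 => trivial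
  | 1 => trivial
  | m + 2 =>
    intro a b ha hb hab v
    obtain ⟨g, hg, hdeg, rfl⟩ := exists_aeval_eq hθ hgen he ha
    obtain ⟨h, hh, hdeg', rfl⟩ := exists_aeval_eq hθ hgen he hb
    have hgh : g + h = 1 := by
      refine eq_of_aeval_eq (θ := θ) (e := e) (by omega)
        ((natDegree_add_le_of_le hdeg hdeg').trans (max_self e).le) (by simp) ?_
      rw [map_add, hab, map_one]
    have steinberg : MilnorQ.symbol (RatFunc F) (m + 2)
        (Fin.cons (polyClass g) (Fin.cons (polyClass h) fun i => τ (v i))) = 0 :=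
      MilnorQ.symbol_cons_cons_eq_zero (RatFunc.algebraMap_ne_zero hg)
        (RatFunc.algebraMap_ne_zero hh) (by rw [← map_add, hgh, map_one]) _
    have hmem := unitMul_minpoly_symbol_sub_symbol_mem hθ hgen he
      (v := fun i => τ ((Fin.cons (mkQ (aeval θ g)) (Fin.cons (mkQ (aeval θ h)) v) :
        Fin (m + 2) → UnitsQ k) i))
      (w := Fin.cons (polyClass g) (Fin.cons (polyClass h) fun i => τ (v i))) (fun i => hτ_mem _)
      (Fin.cases (polyClass_mem_unitsDegLE hg hdeg)
        (Fin.cases (polyClass_mem_unitsDegLE hh hdeg') fun i => hτ_mem _))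
      fun i => (hτ _).trans <|
        Fin.cases (specialization_placeAt_of_aeval_ne_zero hθ ha).symm
          (Fin.cases (specialization_placeAt_of_aeval_ne_zero hθ hb).symm fun i => (hτ _).symm) i
    rw [steinberg, sub_zero] at hmem
    exact (Submodule.Quotient.mk_eq_zero _).2 hmem

lemma unitMul_minpoly_mem_milnorDegLE {x : MilnorQ (RatFunc F) n} (hx : x ∈ milnorDegLE F e n)
    (hx_zero : (placeAt hθ).specialize n x = 0) :
    MilnorQ.unitMul (polyClass (minpoly F θ)) x ∈ milnorDegLE F e (n + 1) := by
  obtain ⟨τ, hτ_mem, hτ⟩ := exists_specialization_section hθ hgen he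
  let mulMinpoly : MilnorQ k n →ₗ[ℚ] MilnorQ (RatFunc F) (n + 1) ⧸ milnorDegLE F e (n + 1) :=
    MilnorQ.lift _ (isSteinberg_unitMul_minpoly_symbol_section hθ hgen he hτ_mem hτ)
  have mulMinpoly_specialize : milnorDegLE F e n ≤
      LinearMap.eqLocus (mulMinpoly ∘ₗ (placeAt hθ).specialize n)
        ((milnorDegLE F e (n + 1)).mkQ ∘ₗ MilnorQ.unitMul (polyClass (minpoly F θ))) := by
    refine Submodule.span_le.2 ?_
    rintro _ ⟨v, hv, rfl⟩
    rw [SetLike.mem_coe, LinearMap.mem_eqLocus, LinearMap.comp_apply, Place.specialize,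
      MilnorQ.map_symbol, MilnorQ.lift_symbol]
    refine (Submodule.Quotient.eq _).2 ?_
    rw [← map_sub]
    exact unitMul_minpoly_symbol_sub_symbol_mem hθ hgen he (fun i => hτ_mem _) hv fun i => hτ _
  have mkQ_eq := LinearMap.mem_eqLocus.1 (mulMinpoly_specialize hx)
  rw [LinearMap.comp_apply, hx_zero, map_zero] at mkQ_eq
  exact (Submodule.Quotient.mk_eq_zero _).1 mkQ_eq.symm

end FinitePlace

end DegreeFiltration

section ClosedPoints

variable {F : Type u} [Field F]

namespace ResField

variable (π : MonicIrr F)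

instance instAlgebra {R : Type*} [CommSemiring R] [Algebra R F] : Algebra R (ResField π) :=
  inferInstanceAs (Algebra R (AdjoinRoot π.1))

instance instIsScalarTower {R : Type*} [CommSemiring R] [Algebra R F] :
    IsScalarTower R F (ResField π) :=
  inferInstanceAs (IsScalarTower R F (AdjoinRoot π.1))

/-- The class of `t` in the residue field `F[t]/(π)`. -/
def root : ResField π :=
  AdjoinRoot.root π.1

lemma isIntegral_root : IsIntegral F (root π) :=
  AdjoinRoot.isIntegral_root π.2.1.ne_zero

lemma minpoly_root : minpoly F (root π) = π.1 := by
  refine (AdjoinRoot.minpoly_root π.2.1.ne_zero).trans ?_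
  rw [π.2.1.leadingCoeff, inv_one, C_1, mul_one]

lemma aeval_root_surjective : Function.Surjective (aeval (R := F) (root π)) := fun z => by
  obtain ⟨g, rfl⟩ := AdjoinRoot.mk_surjective z
  exact ⟨g, AdjoinRoot.aeval_eq g⟩

lemma exists_algHom_root_eq {k : Type*} [Field k] [Algebra F k] {θ : k}
    (hθ : minpoly F θ = π.1) : ∃ f : ResField π →ₐ[F] k, f (root π) = θ := by
  have heval : π.1.eval₂ (Algebra.ofId F k : F →+* k) θ = 0 := by
    rw [← hθ]
    exact minpoly.aeval F θ
  exact ⟨AdjoinRoot.liftAlgHom π.1 (Algebra.ofId F k) θ heval, AdjoinRoot.liftAlgHom_root _ _ _ _⟩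

end ResField

namespace MonicIrr

/-- The place of `F(t)` at the closed point of the affine line defined by `π`. -/
def place (π : MonicIrr F) : Place F (ResField π) :=
  placeAt (ResField.isIntegral_root π)

variable {π π' : MonicIrr F} {e n : ℕ}

lemma valuation_place_of_not_dvd {p : F[X]} (hp : ¬π.1 ∣ p) :
    π.place.valuation (polyClass p) = 0 :=
  valuation_placeAt_of_aeval_ne_zero _ fun h =>
    hp (ResField.minpoly_root π ▸ minpoly.dvd F (ResField.root π) h)

lemma valuation_place_of_ne (hne : π' ≠ π) : π.place.valuation (polyClass π'.1) = 0 :=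
  valuation_place_of_not_dvd fun h => hne <| Subtype.ext <| Eq.symm <|
    eq_of_monic_of_associated π.2.1 π'.2.1 (π.2.2.associated_of_dvd π'.2.2 h)

lemma valuation_place_eq_zero_of_mem_unitsDegLE (he : e < π.1.natDegree)
    {u : UnitsQ (RatFunc F)} (hu : u ∈ unitsDegLE F e) : π.place.valuation u = 0 :=
  valuation_placeAt_eq_zero_of_mem_unitsDegLE _ (by rwa [ResField.minpoly_root]) hu

lemma residue_eq_zero_of_mem_milnorDegLE (he : e < π.1.natDegree)
    {x : MilnorQ (RatFunc F) (n + 1)} (hx : x ∈ milnorDegLE F e (n + 1)) :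
    π.place.residue n x = 0 :=
  MilnorQ.residue_eq_zero_of_mem_symbolSpan _
    (fun _ => valuation_place_eq_zero_of_mem_unitsDegLE he) hx

lemma residue_unitMul_of_ne (hne : π' ≠ π) (he : e < π.1.natDegree) {x : MilnorQ (RatFunc F) n}
    (hx : x ∈ milnorDegLE F e n) :
    π.place.residue n (MilnorQ.unitMul (polyClass π'.1) x) = 0 := by
  rw [Place.residue, MilnorQ.residue_unitMul_of_mem_symbolSpan _
    (fun _ => valuation_place_eq_zero_of_mem_unitsDegLE he) _ hx, valuation_place_of_ne hne,
    zero_smul]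

lemma residue_unitMul_self (x : MilnorQ (RatFunc F) n) :
    π.place.residue n (MilnorQ.unitMul (polyClass π.1) x) = π.place.specialize n x := by
  have valuation_self := valuation_placeAt_minpoly (ResField.isIntegral_root π)
  have specialization_self := specialization_placeAt_minpoly (ResField.isIntegral_root π)
  rw [ResField.minpoly_root] at valuation_self specialization_self
  exact (MilnorQ.residue_unitMul_of_specialization_eq_zero _ specialization_self x).trans
    ((congrArg (· • π.place.specialize n x) valuation_self).trans (one_smul ℚ _))

lemma exists_mem_milnorDegLE_residue_unitMul_eq (he : π.1.natDegree = e + 1)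
    (y : MilnorQ (ResField π) n) :
    ∃ x ∈ milnorDegLE F e n, π.place.residue n (MilnorQ.unitMul (polyClass π.1) x) = y := by
  simp only [residue_unitMul_self]
  exact exists_mem_milnorDegLE_specialize_eq _ (ResField.aeval_root_surjective π)
    (by rwa [ResField.minpoly_root]) y

lemma unitMul_mem_milnorDegLE_of_residue_eq_zero (he : π.1.natDegree = e + 1)
    {x : MilnorQ (RatFunc F) n} (hx : x ∈ milnorDegLE F e n)
    (hres : π.place.residue n (MilnorQ.unitMul (polyClass π.1) x) = 0) :
    MilnorQ.unitMul (polyClass π.1) x ∈ milnorDegLE F e (n + 1) := by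
  rw [residue_unitMul_self] at hres
  have hmem := unitMul_minpoly_mem_milnorDegLE (ResField.isIntegral_root π)
    (ResField.aeval_root_surjective π) (by rwa [ResField.minpoly_root]) hx hres
  rwa [ResField.minpoly_root] at hmem

end MonicIrr

section FiniteRamification

lemma finite_setOf_apply_ne_zero {ι R M : Type*} [Semiring R] [AddCommMonoid M] [Module R M]
    {N : ι → Type*} [∀ i, AddCommMonoid (N i)] [∀ i, Module R (N i)] (f : ∀ i, M →ₗ[R] N i)
    {s : Set M} (hs : Submodule.span R s = ⊤) (h : ∀ x ∈ s, {i | f i x ≠ 0}.Finite) (x : M) :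
    {i | f i x ≠ 0}.Finite := by
  have hx : x ∈ Submodule.span R s := hs ▸ Submodule.mem_top
  induction hx using Submodule.span_induction with
  | mem x hx => exact h x hx
  | zero => simp
  | add x y _ _ hfx hfy =>
    refine (hfx.union hfy).subset fun i hi => ?_
    by_contra! hxy
    simp_all
  | smul c x _ hfx =>
    exact hfx.subset fun i hi hix => hi (by rw [map_smul, hix, smul_zero])

lemma finite_valuation_place_ne_zero (u : UnitsQ (RatFunc F)) :
    {π : MonicIrr F | π.place.valuation u ≠ 0}.Finite := by
  classical
  refine finite_setOf_apply_ne_zero (fun π : MonicIrr F => π.place.valuation) span_polyClass ?_ u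
  rintro _ ⟨p, hp, rfl⟩
  refine Set.Finite.subset (s := Subtype.val ⁻¹'
    ((UniqueFactorizationMonoid.normalizedFactors p).toFinset : Set F[X]))
    ((Finset.finite_toSet _).preimage Subtype.val_injective.injOn) fun π hπ => ?_
  have hdvd : π.1 ∣ p := by
    by_contra h
    exact hπ (MonicIrr.valuation_place_of_not_dvd h)
  rw [Set.mem_preimage, Finset.mem_coe, Multiset.mem_toFinset,
    UniqueFactorizationMonoid.mem_normalizedFactors_iff' hp]
  exact ⟨π.2.2, π.2.1.normalize_eq_self, hdvd⟩

lemma finite_residue_place_ne_zero {n : ℕ} (x : MilnorQ (RatFunc F) (n + 1)) :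
    {π : MonicIrr F | π.place.residue n x ≠ 0}.Finite := by
  refine finite_setOf_apply_ne_zero (fun π : MonicIrr F => π.place.residue n)
    MilnorQ.span_range_symbol ?_ x
  rintro _ ⟨v, rfl⟩
  refine (Set.finite_iUnion fun i => finite_valuation_place_ne_zero (v i)).subset fun π hπ => ?_
  by_contra hv
  simp only [Set.mem_iUnion, Set.mem_ofPred_eq, not_exists, not_not] at hv
  exact hπ (MilnorQ.residue_eq_zero_of_mem_symbolSpan _
    (U := LinearMap.ker π.place.valuation) (fun _ => LinearMap.mem_ker.1)
    (MilnorQ.symbol_mem_symbolSpan fun i => LinearMap.mem_ker.2 (hv i)))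

end FiniteRamification

section Graded

variable {e n : ℕ}

lemma unitsDegLE_succ_le (e : ℕ) : unitsDegLE F (e + 1) ≤ unitsDegLE F e ⊔
    Submodule.span ℚ {u | ∃ π : MonicIrr F, π.1.natDegree = e + 1 ∧ u = polyClass π.1} := by
  refine Submodule.span_le.2 ?_
  rintro _ ⟨p, hp, hdeg, rfl⟩
  rcases hdeg.lt_or_eq with hlt | hdeg
  · exact Submodule.mem_sup_left (polyClass_mem_unitsDegLE hp (Nat.le_of_lt_succ hlt))
  by_cases hirr : Irreducible p
  · have hc : C p.leadingCoeff⁻¹ ≠ 0 := by simpa using hp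
    rw [eq_sub_of_add_eq (polyClass_mul hp hc).symm]
    refine sub_mem (Submodule.mem_sup_right (Submodule.subset_span
      ⟨⟨_, monic_mul_leadingCoeff_inv hp, (irreducible_mul_leadingCoeff_inv).2 hirr⟩, ?_, rfl⟩))
      (Submodule.mem_sup_left (polyClass_mem_unitsDegLE hc (by simp)))
    rw [natDegree_mul_leadingCoeff_inv p hp, hdeg]
  · have not_isUnit : ¬IsUnit p := fun h => by
      have := natDegree_eq_zero_of_isUnit h
      omega
    obtain ⟨a, b, rfl, ha, hb⟩ : ∃ a b, p = a * b ∧ ¬IsUnit a ∧ ¬IsUnit b := by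
      simpa [irreducible_iff, not_isUnit] using hirr
    have ha₀ := left_ne_zero_of_mul hp
    have hb₀ := right_ne_zero_of_mul hp
    have ha_pos := natDegree_pos_iff_degree_pos.2 (degree_pos_of_ne_zero_of_nonunit ha₀ ha)
    have hb_pos := natDegree_pos_iff_degree_pos.2 (degree_pos_of_ne_zero_of_nonunit hb₀ hb)
    rw [natDegree_mul ha₀ hb₀] at hdeg
    rw [polyClass_mul ha₀ hb₀]
    exact Submodule.mem_sup_left (add_mem (polyClass_mem_unitsDegLE ha₀ (by omega))
      (polyClass_mem_unitsDegLE hb₀ (by omega)))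

variable (F) in
/-- The subspace generated by the `e`-th step of the degree filtration and its products with the
monic irreducible polynomials of degree `e + 1`. It contains the next step of the filtration. -/
def milnorDegLESucc (e n : ℕ) : Submodule ℚ (MilnorQ (RatFunc F) (n + 1)) :=
  milnorDegLE F e (n + 1) ⊔ ⨆ π : {π : MonicIrr F // π.1.natDegree = e + 1},
    (milnorDegLE F e n).map (MilnorQ.unitMul (polyClass π.1.1))

lemma unitMul_mem_milnorDegLESucc {π : MonicIrr F} (he : π.1.natDegree = e + 1)
    {x : MilnorQ (RatFunc F) n} (hx : x ∈ milnorDegLE F e n) :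
    MilnorQ.unitMul (polyClass π.1) x ∈ milnorDegLESucc F e n :=
  Submodule.mem_sup_right <| Submodule.mem_iSup_of_mem
    (p := fun π : {π : MonicIrr F // π.1.natDegree = e + 1} =>
      (milnorDegLE F e n).map (MilnorQ.unitMul (polyClass π.1.1)))
    ⟨π, he⟩ (Submodule.mem_map_of_mem hx)

lemma milnorDegLESucc_le_comap_unitMul {u : UnitsQ (RatFunc F)} (hu : u ∈ unitsDegLE F e) :
    milnorDegLESucc F e n ≤ (milnorDegLESucc F e (n + 1)).comap (MilnorQ.unitMul u) := by
  refine sup_le (fun x hx => Submodule.mem_sup_left (unitMul_mem_milnorDegLE hu hx))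
    (iSup_le ?_)
  rintro ⟨π, he⟩ _ ⟨x, hx, rfl⟩
  rw [Submodule.mem_comap, MilnorQ.unitMul_anticomm]
  exact neg_mem (unitMul_mem_milnorDegLESucc he (unitMul_mem_milnorDegLE hu hx))

-- The Steinberg relation of `π / π' + (π' - π) / π' = 1`, where `π' - π` has smaller degree.
lemma unitMul_unitMul_mem_milnorDegLESucc {π π' : MonicIrr F} (he : π.1.natDegree = e + 1)
    (he' : π'.1.natDegree = e + 1) {x : MilnorQ (RatFunc F) n} (hx : x ∈ milnorDegLE F e n) :
    MilnorQ.unitMul (polyClass π.1) (MilnorQ.unitMul (polyClass π'.1) x) ∈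
      milnorDegLESucc F e (n + 1) := by
  rcases eq_or_ne π' π with rfl | hne
  · rw [MilnorQ.unitMul_unitMul_self]
    exact zero_mem _
  have hπ := π.2.1.ne_zero
  have hπ' := π'.2.1.ne_zero
  have hdiff : π'.1 - π.1 ≠ 0 := sub_ne_zero.2 fun h => hne (Subtype.ext h)
  have hdeg : (π'.1 - π.1).natDegree ≤ e := by
    have degree_eq : π'.1.degree = π.1.degree := by
      rw [degree_eq_natDegree hπ', degree_eq_natDegree hπ, he, he']
    have := natDegree_lt_natDegree hdiff (degree_sub_lt_left degree_eq hπ'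
      (by rw [π'.2.1.leadingCoeff, π.2.1.leadingCoeff]))
    omega
  have hdiff_mem := unitMul_mem_milnorDegLE (polyClass_mem_unitsDegLE hdiff hdeg) hx
  have steinberg := MilnorQ.unitMul_unitMul_eq_zero
    (div_ne_zero (RatFunc.algebraMap_ne_zero hπ) (RatFunc.algebraMap_ne_zero hπ'))
    (div_ne_zero (RatFunc.algebraMap_ne_zero hdiff) (RatFunc.algebraMap_ne_zero hπ'))
    (by rw [← add_div, ← map_add, add_sub_cancel,
      div_self (RatFunc.algebraMap_ne_zero hπ')]) x
  rw [mkQ_algebraMap_div hπ hπ', mkQ_algebraMap_div hdiff hπ'] at steinberg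
  simp only [map_sub, LinearMap.sub_apply, MilnorQ.unitMul_unitMul_self, sub_zero] at steinberg
  rw [sub_right_comm, sub_eq_zero, sub_eq_iff_eq_add', ← sub_eq_iff_eq_add] at steinberg
  rw [← steinberg]
  exact sub_mem (unitMul_mem_milnorDegLESucc he hdiff_mem)
    (unitMul_mem_milnorDegLESucc he' hdiff_mem)

lemma milnorDegLESucc_le_comap_unitMul_polyClass {π : MonicIrr F} (he : π.1.natDegree = e + 1) :
    milnorDegLESucc F e n ≤
      (milnorDegLESucc F e (n + 1)).comap (MilnorQ.unitMul (polyClass π.1)) := by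
  refine sup_le (fun x (hx : x ∈ milnorDegLE F e (n + 1)) => ?_) (iSup_le ?_)
  · rw [Submodule.mem_comap]
    exact unitMul_mem_milnorDegLESucc he hx
  · rintro ⟨π', he'⟩ _ ⟨x, hx, rfl⟩
    rw [Submodule.mem_comap]
    exact unitMul_unitMul_mem_milnorDegLESucc he he' hx

lemma unitMul_mem_of_mem_unitsDegLE_succ {N : Submodule ℚ (MilnorQ (RatFunc F) (n + 1))}
    {x : MilnorQ (RatFunc F) n} (hN : ∀ u ∈ unitsDegLE F e, MilnorQ.unitMul u x ∈ N)
    (hπN : ∀ π : MonicIrr F, π.1.natDegree = e + 1 → MilnorQ.unitMul (polyClass π.1) x ∈ N)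
    {u : UnitsQ (RatFunc F)} (hu : u ∈ unitsDegLE F (e + 1)) : MilnorQ.unitMul u x ∈ N := by
  suffices unitsDegLE F (e + 1) ≤ N.comap (MilnorQ.unitMul.flip x) from this hu
  refine (unitsDegLE_succ_le e).trans (sup_le hN (Submodule.span_le.2 ?_))
  rintro _ ⟨π, he, rfl⟩
  exact hπN π he

lemma milnorDegLE_succ_le (e n : ℕ) : milnorDegLE F (e + 1) (n + 1) ≤ milnorDegLESucc F e n := by
  induction n with
  | zero =>
    rw [milnorDegLE, MilnorQ.symbolSpan_succ, Submodule.map₂_le]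
    intro u hu x _
    have hx : x ∈ milnorDegLE F e 0 := by
      rw [milnorDegLE, MilnorQ.symbolSpan_zero]
      exact Submodule.mem_top
    exact unitMul_mem_of_mem_unitsDegLE_succ
      (fun w hw => Submodule.mem_sup_left (unitMul_mem_milnorDegLE hw hx))
      (fun π he => unitMul_mem_milnorDegLESucc he hx) hu
  | succ n ih =>
    rw [milnorDegLE, MilnorQ.symbolSpan_succ, Submodule.map₂_le]
    intro u hu x hx
    exact unitMul_mem_of_mem_unitsDegLE_succ
      (fun w hw => milnorDegLESucc_le_comap_unitMul hw (ih hx))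
      (fun π he => milnorDegLESucc_le_comap_unitMul_polyClass he (ih hx)) hu

end Graded

section MilnorSequence

variable {e n : ℕ}

lemma mem_milnorDegLE_of_residue_eq_zero {x : MilnorQ (RatFunc F) (n + 1)}
    (hx : x ∈ milnorDegLE F (e + 1) (n + 1))
    (hres : ∀ π : MonicIrr F, π.1.natDegree = e + 1 → π.place.residue n x = 0) :
    x ∈ milnorDegLE F e (n + 1) := by
  obtain ⟨low, hlow, top, htop, rfl⟩ := Submodule.mem_sup.1 (milnorDegLE_succ_le e n hx)
  obtain ⟨f, hf, rfl⟩ := (Submodule.mem_iSup_iff_exists_finsupp _ _).1 htop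
  choose z hz hzf using hf
  refine add_mem hlow (sum_mem fun π hπ => ?_)
  have residue_eq := hres π.1 π.2
  have hlt : e < π.1.1.natDegree := π.2.symm ▸ Nat.lt_succ_self e
  rw [map_add, MonicIrr.residue_eq_zero_of_mem_milnorDegLE hlt hlow, zero_add, Finsupp.sum,
    map_sum, Finset.sum_eq_single_of_mem π hπ fun π' _ hne => ?_, ← hzf] at residue_eq
  · rw [← hzf]
    exact MonicIrr.unitMul_mem_milnorDegLE_of_residue_eq_zero π.2 (hz π) residue_eq
  · rw [← hzf]
    exact MonicIrr.residue_unitMul_of_ne (fun h => hne (Subtype.ext h)) hlt (hz π')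

theorem mem_milnorDegLE_zero_of_residue_eq_zero {x : MilnorQ (RatFunc F) (n + 1)}
    (hres : ∀ π : MonicIrr F, π.place.residue n x = 0) : x ∈ milnorDegLE F 0 (n + 1) := by
  obtain ⟨e, he⟩ := exists_mem_milnorDegLE x
  induction e with
  | zero => exact he
  | succ e ih => exact ih (mem_milnorDegLE_of_residue_eq_zero he fun π _ => hres π)

theorem residue_placeAtInfinity_eq_zero {x : MilnorQ (RatFunc F) (n + 1)}
    (hres : ∀ π : MonicIrr F, π.place.residue n x = 0) :
    (placeAtInfinity F).residue n x = 0 := by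
  refine MilnorQ.residue_eq_zero_of_mem_symbolSpan _ (fun u hu => ?_)
    (mem_milnorDegLE_zero_of_residue_eq_zero hres)
  suffices unitsDegLE F 0 ≤ LinearMap.ker (placeAtInfinity F).valuation from this hu
  refine Submodule.span_le.2 ?_
  rintro _ ⟨p, hp, hdeg, rfl⟩
  rw [SetLike.mem_coe, LinearMap.mem_ker, Place.valuation_polyClass _ hp]
  simp [placeAtInfinity, Nat.le_zero.1 hdeg]

lemma exists_mem_milnorDegLE_residue_eq_of_natDegree_eq (e : ℕ)
    (x : MilnorQ (RatFunc F) (n + 1)) :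
    ∃ z ∈ milnorDegLE F (e + 1) (n + 1), ∀ π : MonicIrr F, π.1.natDegree = e + 1 →
      π.place.residue n z = π.place.residue n x := by
  choose! ζ hζ_mem hζ using fun (π : MonicIrr F) (he : π.1.natDegree = e + 1) =>
    MonicIrr.exists_mem_milnorDegLE_residue_unitMul_eq he (π.place.residue n x)
  have finite : {π : MonicIrr F | π.1.natDegree = e + 1 ∧ π.place.residue n x ≠ 0}.Finite :=
    (finite_residue_place_ne_zero x).subset fun π hπ => hπ.2
  have mem_finite {π : MonicIrr F} := finite.mem_toFinset (a := π)
  refine ⟨∑ π ∈ finite.toFinset, MilnorQ.unitMul (polyClass π.1) (ζ π),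
    sum_mem fun π hπ => ?_, fun π he => ?_⟩
  · obtain ⟨he, -⟩ := mem_finite.1 hπ
    exact unitMul_mem_milnorDegLE (polyClass_mem_unitsDegLE π.2.1.ne_zero he.le)
      (milnorDegLE_mono n e.le_succ (hζ_mem π he))
  have hlt : e < π.1.natDegree := he ▸ Nat.lt_succ_self e
  rw [map_sum, Finset.sum_eq_single π (fun π' hπ' hne =>
    MonicIrr.residue_unitMul_of_ne hne hlt (hζ_mem π' (mem_finite.1 hπ').1)), hζ π he]
  intro hπ
  rw [hζ π he]
  exact of_not_not fun hne => hπ (mem_finite.2 ⟨he, hne⟩)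

lemma exists_mem_milnorDegLE_residue_eq (e : ℕ) (x : MilnorQ (RatFunc F) (n + 1)) :
    ∃ z ∈ milnorDegLE F e (n + 1), ∀ π : MonicIrr F, π.1.natDegree ≤ e →
      π.place.residue n z = π.place.residue n x := by
  induction e generalizing x with
  | zero => exact ⟨0, zero_mem _, fun π he => absurd π.2.2.natDegree_pos he.not_gt⟩
  | succ e ih =>
    obtain ⟨top, htop_mem, htop⟩ := exists_mem_milnorDegLE_residue_eq_of_natDegree_eq e x
    obtain ⟨low, hlow_mem, hlow⟩ := ih (x - top)
    refine ⟨low + top, add_mem (milnorDegLE_mono _ e.le_succ hlow_mem) htop_mem, fun π he => ?_⟩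
    rw [map_add]
    rcases he.lt_or_eq with hlt | heq
    · rw [hlow π (Nat.le_of_lt_succ hlt), map_sub, sub_add_cancel]
    · rw [MonicIrr.residue_eq_zero_of_mem_milnorDegLE (heq ▸ Nat.lt_succ_self e) hlow_mem,
        zero_add, htop π heq]

theorem exists_residue_eq_single (π : MonicIrr F) (y : MilnorQ (ResField π) n) :
    ∃ x : MilnorQ (RatFunc F) (n + 1), π.place.residue n x = y ∧
      ∀ π' : MonicIrr F, π' ≠ π → π'.place.residue n x = 0 := by
  obtain ⟨e, he⟩ := Nat.exists_eq_add_one_of_ne_zero π.2.2.natDegree_pos.ne'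
  obtain ⟨ζ, hζ_mem, hζ⟩ := MonicIrr.exists_mem_milnorDegLE_residue_unitMul_eq he y
  obtain ⟨z, hz_mem, hz⟩ :=
    exists_mem_milnorDegLE_residue_eq e (MilnorQ.unitMul (polyClass π.1) ζ)
  refine ⟨MilnorQ.unitMul (polyClass π.1) ζ - z, ?_, fun π' hne => ?_⟩
  · rw [map_sub, hζ, MonicIrr.residue_eq_zero_of_mem_milnorDegLE (by omega) hz_mem, sub_zero]
  · rw [map_sub]
    rcases le_or_gt π'.1.natDegree e with hle | hlt
    · rw [hz π' hle, sub_self]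
    · rw [MonicIrr.residue_unitMul_of_ne hne.symm hlt hζ_mem,
        MonicIrr.residue_eq_zero_of_mem_milnorDegLE hlt hz_mem, sub_zero]

end MilnorSequence

end ClosedPoints

section Constants

variable {F : Type u} [Field F] {n : ℕ}

lemma unitsQMap_C_mkQ (a : F) : unitsQMap RatFunc.C (mkQ a) = polyClass (C a) := by
  rw [unitsQMap_mkQ, polyClass, RatFunc.algebraMap_C]

lemma Place.residue_unitMul_mapField_C {k : Type u} [Field k] (P : Place F k) (i : F →+* k)
    (hord : ∀ a : F, a ≠ 0 → P.ord (C a) = 0) (hlead : ∀ a : F, a ≠ 0 → P.lead (C a) = i a)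
    (u : UnitsQ (RatFunc F)) (x : MilnorQ F n) :
    P.residue n (MilnorQ.unitMul u (MilnorQ.mapField RatFunc.C n x)) =
      P.valuation u • MilnorQ.mapField i n x := by
  have valuation_comp : P.valuation ∘ₗ unitsQMap RatFunc.C = 0 := UnitsQ.hom_ext fun a ha => by
    rw [LinearMap.comp_apply, unitsQMap_C_mkQ, P.valuation_polyClass (C_ne_zero.2 ha), hord a ha,
      Int.cast_zero, LinearMap.zero_apply]
  have specialization_comp : P.specialization ∘ₗ unitsQMap RatFunc.C = unitsQMap i :=
    UnitsQ.hom_ext fun a ha => by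
      rw [LinearMap.comp_apply, unitsQMap_C_mkQ, P.specialization_polyClass (C_ne_zero.2 ha),
        hlead a ha, unitsQMap_mkQ]
  have residue_eq := MilnorQ.residue_unitMul_of_mem_symbolSpan P.isTamePair
    (U := LinearMap.range (unitsQMap RatFunc.C))
    (by rintro _ ⟨w, rfl⟩; exact LinearMap.congr_fun valuation_comp w) u
    (MilnorQ.map_mem_symbolSpan_range (MilnorQ.preservesSteinberg_unitsQMap RatFunc.C) x)
  exact residue_eq.trans (congrArg _
    (MilnorQ.map_map _ _ _ (LinearMap.congr_fun specialization_comp) x))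

lemma residue_placeAtInfinity_unitMul_mapField_C (u : UnitsQ (RatFunc F)) (x : MilnorQ F n) :
    (placeAtInfinity F).residue n (MilnorQ.unitMul u (MilnorQ.mapField RatFunc.C n x)) =
      (placeAtInfinity F).valuation u • x := by
  rw [(placeAtInfinity F).residue_unitMul_mapField_C (RingHom.id F), MilnorQ.mapField_id]
  · intro a _
    simp [placeAtInfinity]
  · intro a _
    simp [placeAtInfinity]

lemma residue_placeAt_unitMul_mapField_C {k : Type u} [Field k] [Algebra F k] {θ : k}
    (hθ : IsIntegral F θ) (u : UnitsQ (RatFunc F)) (x : MilnorQ F n) :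
    (placeAt hθ).residue n (MilnorQ.unitMul u (MilnorQ.mapField RatFunc.C n x)) =
      (placeAt hθ).valuation u • MilnorQ.mapField (algebraMap F k) n x := by
  have aeval_ne_zero {a : F} (ha : a ≠ 0) : aeval θ (C a) ≠ 0 := by simpa using ha
  refine (placeAt hθ).residue_unitMul_mapField_C _ (fun a ha => ?_) (fun a ha => ?_) u x
  · have := ordAt_minpoly_pow_mul hθ (m := 0) (aeval_ne_zero ha)
    rw [pow_zero, one_mul] at this
    exact congrArg Nat.cast this
  · have := leadAt_minpoly_pow_mul hθ (m := 0) (aeval_ne_zero ha)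
    rw [pow_zero, one_mul, aeval_C] at this
    exact this

end Constants

section BaseChange

variable {F K : Type u} [Field F] [Field K] [Algebra F K] {n : ℕ}

variable (F K) in
/-- The inclusion `F(t) → K(t)`. -/
def ratFuncMap : RatFunc F →+* RatFunc K :=
  IsFractionRing.lift (A := F[X])
    (g := (algebraMap K[X] (RatFunc K)).comp (mapRingHom (algebraMap F K)))
    ((RatFunc.algebraMap_injective K).comp (map_injective _ (algebraMap F K).injective))

lemma unitsQMap_ratFuncMap_polyClass (p : F[X]) :
    unitsQMap (ratFuncMap F K) (polyClass p) = polyClass (p.map (algebraMap F K)) := by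
  rw [polyClass, unitsQMap_mkQ, ratFuncMap, IsFractionRing.lift_algebraMap]
  rfl

lemma residue_placeAtInfinity_mapField_ratFuncMap (x : MilnorQ (RatFunc F) (n + 1)) :
    (placeAtInfinity K).residue n (MilnorQ.mapField (ratFuncMap F K) (n + 1) x) =
      MilnorQ.mapField (algebraMap F K) n ((placeAtInfinity F).residue n x) := by
  have valuation_comp : (placeAtInfinity K).valuation ∘ₗ unitsQMap (ratFuncMap F K) =
      (placeAtInfinity F).valuation := hom_ext_polyClass fun p hp => by
    rw [LinearMap.comp_apply, unitsQMap_ratFuncMap_polyClass, Place.valuation_polyClass _ hp,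
      Place.valuation_polyClass _ (map_ne_zero hp)]
    simp only [placeAtInfinity, natDegree_map]
  have specialization_comp : (placeAtInfinity K).specialization ∘ₗ unitsQMap (ratFuncMap F K) =
      unitsQMap (algebraMap F K) ∘ₗ (placeAtInfinity F).specialization :=
    hom_ext_polyClass fun p hp => by
      rw [LinearMap.comp_apply, LinearMap.comp_apply, unitsQMap_ratFuncMap_polyClass,
        Place.specialization_polyClass _ hp, Place.specialization_polyClass _ (map_ne_zero hp),
        unitsQMap_mkQ]
      simp only [placeAtInfinity, leadingCoeff_map]
  have residue_eq := MilnorQ.residue_map (e := 1) (w := 0) (placeAtInfinity F).isTamePair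
    (placeAtInfinity K).isTamePair (MilnorQ.preservesSteinberg_unitsQMap (ratFuncMap F K))
    (MilnorQ.preservesSteinberg_unitsQMap (algebraMap F K))
    (fun u => by rw [one_mul]; exact LinearMap.congr_fun valuation_comp u)
    (fun u => by rw [smul_zero, add_zero]; exact LinearMap.congr_fun specialization_comp u) x
  rw [one_smul] at residue_eq
  exact residue_eq

lemma polyClass_pow {p : F[X]} (hp : p ≠ 0) (m : ℕ) :
    polyClass (p ^ m) = (m : ℚ) • polyClass p := by
  rw [polyClass, map_pow, mkQ_pow (RatFunc.algebraMap_ne_zero hp)]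
  rfl

lemma hom_ext_polyClass_of_aeval_ne_zero {k : Type u} [Field k] [Algebra F k] {θ : k}
    (hθ : IsIntegral F θ) {M : Type*} [AddCommGroup M] [Module ℚ M]
    {f g : UnitsQ (RatFunc F) →ₗ[ℚ] M}
    (hmin : f (polyClass (minpoly F θ)) = g (polyClass (minpoly F θ)))
    (h : ∀ p : F[X], aeval θ p ≠ 0 → f (polyClass p) = g (polyClass p)) : f = g := by
  refine hom_ext_polyClass fun p hp => ?_
  obtain ⟨m, q, rfl, hq⟩ := exists_eq_minpoly_pow_mul hθ hp
  have hmin₀ := minpoly.ne_zero hθ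
  rw [polyClass_mul (pow_ne_zero m hmin₀) (right_ne_zero_of_mul hp), polyClass_pow hmin₀,
    map_add, map_add, map_smul, map_smul, hmin, h q hq]

section FinitePlaces

variable {k k' : Type u} [Field k] [Field k'] [Algebra F k] [Algebra K k'] [Algebra F k']
  [IsScalarTower F K k'] {θ : k} {θ' : k'} (hθ : IsIntegral F θ) (hθ' : IsIntegral K θ')
  {i : k →ₐ[F] k'} (hi : i θ = θ')

include hi

lemma aeval_map_algebraMap_of_algHom (p : F[X]) :
    aeval θ' (p.map (algebraMap F K)) = i (aeval θ p) := by
  rw [aeval_map_algebraMap, ← hi, aeval_algHom_apply]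

lemma aeval_map_algebraMap_ne_zero {p : F[X]} (hp : aeval θ p ≠ 0) :
    aeval θ' (p.map (algebraMap F K)) ≠ 0 := by
  rwa [aeval_map_algebraMap_of_algHom hi, _root_.map_ne_zero]

lemma valuation_placeAt_unitsQMap_ratFuncMap (u : UnitsQ (RatFunc F)) :
    (placeAt hθ').valuation (unitsQMap (ratFuncMap F K) u) =
      (placeAt hθ').valuation (polyClass ((minpoly F θ).map (algebraMap F K))) *
        (placeAt hθ).valuation u := by
  set e := (placeAt hθ').valuation (polyClass ((minpoly F θ).map (algebraMap F K)))
  suffices (placeAt hθ').valuation ∘ₗ unitsQMap (ratFuncMap F K) =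
      e • (placeAt hθ).valuation from LinearMap.congr_fun this u
  refine hom_ext_polyClass_of_aeval_ne_zero hθ ?_ fun p hp => ?_
  · rw [LinearMap.comp_apply, unitsQMap_ratFuncMap_polyClass, LinearMap.smul_apply,
      valuation_placeAt_minpoly, smul_eq_mul, mul_one]
  · rw [LinearMap.comp_apply, unitsQMap_ratFuncMap_polyClass, LinearMap.smul_apply,
      valuation_placeAt_of_aeval_ne_zero hθ hp, smul_zero,
      valuation_placeAt_of_aeval_ne_zero hθ' (aeval_map_algebraMap_ne_zero hi hp)]

lemma specialization_placeAt_unitsQMap_ratFuncMap (u : UnitsQ (RatFunc F)) :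
    (placeAt hθ').specialization (unitsQMap (ratFuncMap F K) u) =
      unitsQMap i.toRingHom ((placeAt hθ).specialization u) + (placeAt hθ).valuation u •
        (placeAt hθ').specialization (polyClass ((minpoly F θ).map (algebraMap F K))) := by
  set w := (placeAt hθ').specialization (polyClass ((minpoly F θ).map (algebraMap F K)))
  suffices (placeAt hθ').specialization ∘ₗ unitsQMap (ratFuncMap F K) =
      unitsQMap i.toRingHom ∘ₗ (placeAt hθ).specialization +
        (placeAt hθ).valuation.smulRight w from LinearMap.congr_fun this u
  refine hom_ext_polyClass_of_aeval_ne_zero hθ ?_ fun p hp => ?_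
  · rw [LinearMap.comp_apply, unitsQMap_ratFuncMap_polyClass, LinearMap.add_apply,
      LinearMap.comp_apply, specialization_placeAt_minpoly, map_zero, zero_add,
      LinearMap.smulRight_apply, valuation_placeAt_minpoly, one_smul]
  · rw [LinearMap.comp_apply, unitsQMap_ratFuncMap_polyClass, LinearMap.add_apply,
      LinearMap.comp_apply, LinearMap.smulRight_apply,
      valuation_placeAt_of_aeval_ne_zero hθ hp, zero_smul, add_zero,
      specialization_placeAt_of_aeval_ne_zero hθ hp, unitsQMap_mkQ,
      specialization_placeAt_of_aeval_ne_zero hθ' (aeval_map_algebraMap_ne_zero hi hp),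
      aeval_map_algebraMap_of_algHom hi]
    rfl

lemma residue_placeAt_mapField_ratFuncMap (x : MilnorQ (RatFunc F) (n + 1)) :
    (placeAt hθ').residue n (MilnorQ.mapField (ratFuncMap F K) (n + 1) x) =
      (placeAt hθ').valuation (polyClass ((minpoly F θ).map (algebraMap F K))) •
        MilnorQ.mapField i.toRingHom n ((placeAt hθ).residue n x) :=
  MilnorQ.residue_map (placeAt hθ).isTamePair (placeAt hθ').isTamePair
    (MilnorQ.preservesSteinberg_unitsQMap _) (MilnorQ.preservesSteinberg_unitsQMap _)
    (valuation_placeAt_unitsQMap_ratFuncMap hθ hθ' hi)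
    (specialization_placeAt_unitsQMap_ratFuncMap hθ hθ' hi) x

end FinitePlaces

lemma valuation_placeAt_map_minpoly {k : Type u} [Field k] [Algebra F k] [Algebra K k]
    [IsScalarTower F K k] {θ : k} (hθ : IsIntegral K θ) (hsep : (minpoly F θ).Separable) :
    (placeAt hθ).valuation (polyClass ((minpoly F θ).map (algebraMap F K))) = 1 := by
  obtain ⟨q, hq⟩ := minpoly.dvd_map_of_isScalarTower F K θ
  have coprime : IsCoprime (minpoly K θ) q := (hq ▸ hsep.map : (_ * q).Separable).isCoprime
  have aeval_ne_zero : aeval θ q ≠ 0 := fun h =>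
    minpoly.not_isUnit K θ (coprime.isUnit_of_dvd' dvd_rfl (minpoly.dvd K θ h))
  have hq₀ : q ≠ 0 := fun h => aeval_ne_zero (by rw [h, map_zero])
  rw [hq, polyClass_mul (minpoly.ne_zero hθ) hq₀, map_add, valuation_placeAt_minpoly,
    valuation_placeAt_of_aeval_ne_zero hθ aeval_ne_zero, add_zero]

end BaseChange

section GaloisDescent

variable {F K : Type u} [Field F] [Field K] [Algebra F K] {n : ℕ}

/-- The closed point of the affine line over `F` defined by an element integral over `F`. -/
def MonicIrr.ofIsIntegral {k : Type*} [Field k] [Algebra F k] {θ : k} (hθ : IsIntegral F θ) :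
    MonicIrr F :=
  ⟨minpoly F θ, minpoly.monic hθ, minpoly.irreducible hθ⟩

lemma exists_algHom_resField_ofIsIntegral (pb : PowerBasis F K) :
    ∃ f : K →ₐ[F] ResField (MonicIrr.ofIsIntegral pb.isIntegral_gen),
      f pb.gen = ResField.root (MonicIrr.ofIsIntegral pb.isIntegral_gen) := by
  set π := MonicIrr.ofIsIntegral pb.isIntegral_gen
  have aeval_root : aeval (ResField.root π) (minpoly F pb.gen) = 0 := by
    conv_lhs => rw [show minpoly F pb.gen = π.1 from rfl, ← ResField.minpoly_root π]
    exact minpoly.aeval F _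
  exact ⟨pb.lift _ aeval_root, pb.lift_gen _ aeval_root⟩

-- Reciprocity for `{π, x}`, where `π` is the minimal polynomial of a generator of `K`: its only
-- residues are the image of `x` in `F[t]/(π) ≃ K` and `-deg π • x` at infinity.
theorem mapField_algebraMap_injective (pb : PowerBasis F K) :
    Function.Injective (MilnorQ.mapField (algebraMap F K) n) := by
  refine (injective_iff_map_eq_zero _).2 fun x hx => ?_
  set π := MonicIrr.ofIsIntegral pb.isIntegral_gen
  have residue_infinity := residue_placeAtInfinity_eq_zero
    (x := MilnorQ.unitMul (polyClass π.1) (MilnorQ.mapField RatFunc.C n x)) fun π' => by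
      rw [MonicIrr.place, residue_placeAt_unitMul_mapField_C]
      rcases eq_or_ne π π' with rfl | hne
      · obtain ⟨f, -⟩ := exists_algHom_resField_ofIsIntegral pb
        rw [← f.comp_algebraMap, ← MilnorQ.mapField_mapField, hx, map_zero, smul_zero]
      · exact smul_eq_zero_of_left (MonicIrr.valuation_place_of_ne hne) _
  rw [residue_placeAtInfinity_unitMul_mapField_C,
    Place.valuation_polyClass _ π.2.1.ne_zero] at residue_infinity
  refine (smul_eq_zero.1 residue_infinity).resolve_left ?_
  simpa [placeAtInfinity] using π.2.2.natDegree_pos.ne'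

lemma exists_algEquiv_algebraMap_eq {k : Type*} [Field k] [Algebra F k] [Algebra K k]
    [IsScalarTower F K k] [IsGalois F K] {θ : k} {a : K} (h : minpoly F θ = minpoly F a) :
    ∃ σ : K ≃ₐ[F] K, algebraMap K k (σ a) = θ := by
  have ha := Algebra.IsIntegral.isIntegral (R := F) a
  have aeval_θ : aeval θ (minpoly F a) = 0 := by rw [← h, minpoly.aeval]
  obtain ⟨b, rfl⟩ := (IsGalois.splits F a).mem_range_of_isRoot (map_ne_zero (minpoly.ne_zero ha))
    (i := algebraMap K k) (x := θ)
    (by rwa [IsRoot, eval_map_algebraMap, aeval_map_algebraMap])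
  have aeval_b : aeval b (minpoly F a) = 0 := by
    rwa [aeval_algebraMap_apply, map_eq_zero] at aeval_θ
  obtain ⟨σ, rfl⟩ := minpoly.exists_algEquiv_of_root' ha.isAlgebraic aeval_b
  exact ⟨σ, rfl⟩

section ConjugateSum

variable {k : Type u} [Field k] [Algebra K k] {θ : k} (hθ : IsIntegral K θ)

lemma valuation_placeAt_X_sub_C_of_ne {b : K} (hb : algebraMap K k b ≠ θ) :
    (placeAt hθ).valuation (polyClass (X - C b)) = 0 := by
  refine valuation_placeAt_of_aeval_ne_zero hθ ?_
  rw [map_sub, aeval_X, aeval_C]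
  exact sub_ne_zero.2 hb.symm

lemma valuation_placeAt_X_sub_C_of_eq {b : K} (hb : algebraMap K k b = θ) :
    (placeAt hθ).valuation (polyClass (X - C b)) = 1 := by
  rw [← minpoly.eq_X_sub_C k b, hb, valuation_placeAt_minpoly]

variable [FiniteDimensional F K] (pb : PowerBasis F K) (y : MilnorQ K n)

/-- The element `∑ σ, {t - σ a, σ y}` of the Milnor K-theory of `K(t)`, where `a` generates `K`
over `F` and `σ` runs over the automorphisms of `K` over `F`. -/
def conjugateSum : MilnorQ (RatFunc K) (n + 1) :=
  ∑ σ : K ≃ₐ[F] K, MilnorQ.unitMul (polyClass (X - C (σ pb.gen)))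
    (MilnorQ.mapField RatFunc.C n (MilnorQ.mapField σ.toAlgHom.toRingHom n y))

lemma residue_placeAtInfinity_conjugateSum :
    (placeAtInfinity K).residue n (conjugateSum pb y) =
      -∑ σ : K ≃ₐ[F] K, MilnorQ.mapField σ.toAlgHom.toRingHom n y := by
  rw [conjugateSum, map_sum, ← Finset.sum_neg_distrib]
  refine Finset.sum_congr rfl fun σ _ => ?_
  rw [residue_placeAtInfinity_unitMul_mapField_C,
    Place.valuation_polyClass _ (X_sub_C_ne_zero _)]
  simp [placeAtInfinity]

lemma residue_placeAt_conjugateSum_of_eq {σ : K ≃ₐ[F] K}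
    (hσ : algebraMap K k (σ pb.gen) = θ) :
    (placeAt hθ).residue n (conjugateSum pb y) =
      MilnorQ.mapField (algebraMap K k) n (MilnorQ.mapField σ.toAlgHom.toRingHom n y) := by
  simp only [conjugateSum, map_sum, residue_placeAt_unitMul_mapField_C]
  rw [Finset.sum_eq_single_of_mem σ (Finset.mem_univ σ),
    valuation_placeAt_X_sub_C_of_eq hθ hσ, one_smul]
  intro τ _ hne
  rw [valuation_placeAt_X_sub_C_of_ne hθ, zero_smul]
  intro hτ
  have gen_eq : τ pb.gen = σ pb.gen := (algebraMap K k).injective (hτ.trans hσ.symm)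
  exact hne (AlgEquiv.coe_toAlgHom_injective (pb.algHom_ext gen_eq))

variable [Algebra F k] [IsScalarTower F K k]

lemma residue_placeAt_conjugateSum_of_minpoly_ne (hne : minpoly F θ ≠ minpoly F pb.gen) :
    (placeAt hθ).residue n (conjugateSum pb y) = 0 := by
  simp only [conjugateSum, map_sum, residue_placeAt_unitMul_mapField_C]
  refine Finset.sum_eq_zero fun σ _ => ?_
  rw [valuation_placeAt_X_sub_C_of_ne hθ, zero_smul]
  rintro rfl
  exact hne (by rw [minpoly.algebraMap_eq (algebraMap K k).injective, minpoly.algEquiv_eq])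

end ConjugateSum

variable [FiniteDimensional F K] [IsGalois F K]

lemma residue_place_mapField_ratFuncMap (pb : PowerBasis F K)
    {f : K →ₐ[F] ResField (MonicIrr.ofIsIntegral pb.isIntegral_gen)}
    (hf : f pb.gen = ResField.root _) {y : MilnorQ K n} {x : MilnorQ (RatFunc F) (n + 1)}
    (hx : (MonicIrr.ofIsIntegral pb.isIntegral_gen).place.residue n x =
      MilnorQ.mapField f.toRingHom n y)
    (hx_ne : ∀ π, π ≠ MonicIrr.ofIsIntegral pb.isIntegral_gen → π.place.residue n x = 0)
    (π : MonicIrr K) :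
    π.place.residue n (MilnorQ.mapField (ratFuncMap F K) (n + 1) x) =
      π.place.residue n (conjugateSum pb y) := by
  have hK := ResField.isIntegral_root π
  have hF : IsIntegral F (ResField.root π) := isIntegral_trans _ hK
  by_cases hmin : minpoly F (ResField.root π) = minpoly F pb.gen
  · obtain ⟨i, hi⟩ := ResField.exists_algHom_root_eq (MonicIrr.ofIsIntegral pb.isIntegral_gen) hmin
    obtain ⟨σ, hσ⟩ := exists_algEquiv_algebraMap_eq hmin
    have hsep : (minpoly F (ResField.root π)).Separable := hmin ▸ IsGalois.separable F pb.gen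
    have algHom_comp : i.comp f = (IsScalarTower.toAlgHom F K (ResField π)).comp σ.toAlgHom :=
      pb.algHom_ext ((congrArg i hf).trans (hi.trans hσ.symm))
    have comp_eq : i.toRingHom.comp f.toRingHom =
        (algebraMap K (ResField π)).comp σ.toAlgHom.toRingHom :=
      RingHom.ext (AlgHom.congr_fun algHom_comp)
    have residue_eq := residue_placeAt_mapField_ratFuncMap (ResField.isIntegral_root _) hK hi x
    rw [(ResField.minpoly_root _).trans hmin.symm, valuation_placeAt_map_minpoly hK hsep,
      one_smul] at residue_eq
    refine residue_eq.trans ((congrArg _ hx).trans ?_)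
    rw [MilnorQ.mapField_mapField, comp_eq, ← MilnorQ.mapField_mapField]
    exact (residue_placeAt_conjugateSum_of_eq hK pb y hσ).symm
  · obtain ⟨i, hi⟩ := ResField.exists_algHom_root_eq (MonicIrr.ofIsIntegral hF) rfl
    have residue_eq_zero := hx_ne (MonicIrr.ofIsIntegral hF) fun h => hmin (congrArg Subtype.val h)
    refine (residue_placeAt_mapField_ratFuncMap (ResField.isIntegral_root _) hK hi x).trans ?_
    rw [MonicIrr.place, residue_placeAt_conjugateSum_of_minpoly_ne hK pb y hmin]
    exact (congrArg (_ • MilnorQ.mapField i.toRingHom n ·) residue_eq_zero).trans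
      (by rw [map_zero, smul_zero])

variable (F) in
theorem sum_mapField_mem_range_mapField (y : MilnorQ K n) :
    ∑ σ : K ≃ₐ[F] K, MilnorQ.mapField σ.toAlgHom.toRingHom n y ∈
      LinearMap.range (MilnorQ.mapField (algebraMap F K) n) := by
  let pb := Field.powerBasisOfFiniteOfSeparable F K
  obtain ⟨f, hf⟩ := exists_algHom_resField_ofIsIntegral pb
  obtain ⟨x, hx, hx_ne⟩ := exists_residue_eq_single _ (MilnorQ.mapField f.toRingHom n y)
  have reciprocity := residue_placeAtInfinity_eq_zero
    (x := MilnorQ.mapField (ratFuncMap F K) (n + 1) x - conjugateSum pb y) fun π => by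
      rw [map_sub, residue_place_mapField_ratFuncMap pb hf hx hx_ne, sub_self]
  rw [map_sub, residue_placeAtInfinity_mapField_ratFuncMap, residue_placeAtInfinity_conjugateSum,
    sub_neg_eq_add, add_comm] at reciprocity
  rw [eq_neg_of_add_eq_zero_left reciprocity]
  exact neg_mem (LinearMap.mem_range_self _ _)

theorem range_mapField_algebraMap : Set.range (MilnorQ.mapField (algebraMap F K) n) =
    {y | ∀ σ : K ≃ₐ[F] K, MilnorQ.mapField σ.toAlgHom.toRingHom n y = y} := by
  refine Set.Subset.antisymm ?_ fun y hy => ?_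
  · rintro _ ⟨x, rfl⟩ σ
    rw [MilnorQ.mapField_mapField]
    exact congrArg (MilnorQ.mapField · n x) σ.toAlgHom.comp_algebraMap
  · have smul_mem := sum_mapField_mem_range_mapField F y
    rw [Finset.sum_congr rfl fun σ _ => hy σ, Finset.sum_const, Finset.card_univ,
      ← Nat.cast_smul_eq_nsmul ℚ] at smul_mem
    exact (Submodule.smul_mem_iff _ (Nat.cast_ne_zero.2 Fintype.card_ne_zero)).1 smul_mem

end GaloisDescent

end

/-- Galois descent for rational Milnor K-theory. -/
theorem statement_18 (F₁ F₂ : Type u) [Field F₁] [Field F₂] [Algebra F₁ F₂]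
    [FiniteDimensional F₁ F₂] [IsGalois F₁ F₂] (n : ℕ) (hn : 1 ≤ n)
    (jK : MilnorQ F₁ n →ₗ[ℚ] MilnorQ F₂ n)
    (hjK : ∀ x : ⋀[ℚ]^n (UnitsQ F₁),
      jK (MilnorQ.mk x) = MilnorQ.mk (powMap n (unitsQMap (algebraMap F₁ F₂)) x))
    (T : (F₂ ≃ₐ[F₁] F₂) → (MilnorQ F₂ n →ₗ[ℚ] MilnorQ F₂ n))
    (hT : ∀ (σ : F₂ ≃ₐ[F₁] F₂) (x : ⋀[ℚ]^n (UnitsQ F₂)),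
      T σ (MilnorQ.mk x) = MilnorQ.mk (powMap n (unitsQMap σ.toAlgHom.toRingHom) x)) :
    Function.Injective jK ∧
    Set.range jK = {y : MilnorQ F₂ n | ∀ σ : F₂ ≃ₐ[F₁] F₂, T σ y = y} := by
  obtain rfl := MilnorQ.eq_mapField _ hjK
  obtain rfl : T = fun σ => MilnorQ.mapField σ.toAlgHom.toRingHom n :=
    funext fun σ => MilnorQ.eq_mapField _ (hT σ)
  exact ⟨mapField_algebraMap_injective (Field.powerBasisOfFiniteOfSeparable F₁ F₂),
    range_mapField_algebraMap⟩
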